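/- arXiv:2308.14193 — 3 statements merged into one kernel-verified Lean document; each statement's English description precedes it below -/
import Mathlib

section
/- In a Hilbert space X, for T : X ⇉ X and (x̄, x̄*) ∈ gph T, local maximal monotonicity of type (A) around (x̄, x̄*) is equivalent to local maximal monotonicity of type (B) around (x̄, x̄*). -/
open Set Filter Topology RealInnerProductSpace

variable {X : Type*} [NormedAddCommGroup X] [InnerProductSpace ℝ X] [CompleteSpace X]

/-- Graph of a set-valued map. -/
def gph (T : X → Set X) : Set (X × X) := {p | p.2 ∈ T p.1}

/-- Monotone set-valued operator on a Hilbert space. -/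
def Mono (T : X → Set X) : Prop :=
  ∀ p ∈ gph T, ∀ q ∈ gph T, 0 ≤ ⟪p.2 - q.2, p.1 - q.1⟫

/-- Maximal monotone operator. -/
def MaxMono (T : X → Set X) : Prop :=
  Mono T ∧ ∀ S : X → Set X, Mono S → gph T ⊆ gph S → gph S = gph T

/-- σ-strongly monotone operator. -/
def StrMono (σ : ℝ) (T : X → Set X) : Prop :=
  ∀ p ∈ gph T, ∀ q ∈ gph T, σ * ‖p.1 - q.1‖ ^ 2 ≤ ⟪p.2 - q.2, p.1 - q.1⟫

/-- σ-strongly maximal monotone operator. -/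
def StrMaxMono (σ : ℝ) (T : X → Set X) : Prop :=
  StrMono σ T ∧ ∀ S : X → Set X, StrMono σ S → gph T ⊆ gph S → gph S = gph T

/-- Monotone with respect to a set `W ⊆ X × X`. -/
def MonoOn' (T : X → Set X) (W : Set (X × X)) : Prop :=
  ∀ p ∈ gph T ∩ W, ∀ q ∈ gph T ∩ W, 0 ≤ ⟪p.2 - q.2, p.1 - q.1⟫

/-- σ-strongly monotone with respect to a set `W ⊆ X × X`. -/
def StrMonoOn' (σ : ℝ) (T : X → Set X) (W : Set (X × X)) : Prop :=
  ∀ p ∈ gph T ∩ W, ∀ q ∈ gph T ∩ W, σ * ‖p.1 - q.1‖ ^ 2 ≤ ⟪p.2 - q.2, p.1 - q.1⟫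

/-- Locally maximal monotone of type (A) with respect to `W`. -/
def LocMaxA (T : X → Set X) (W : Set (X × X)) : Prop :=
  MonoOn' T W ∧ ∀ S : X → Set X, MonoOn' S W → gph T ∩ W ⊆ gph S ∩ W →
    gph S ∩ W = gph T ∩ W

/-- Locally maximal monotone of type (A) around a graph point. -/
def LocMaxAAt (T : X → Set X) (x v : X) : Prop :=
  ∃ U ∈ 𝓝 x, ∃ V ∈ 𝓝 v, LocMaxA T (U ×ˢ V)

/-- Locally maximal monotone of type (B) around a graph point. -/
def LocMaxBAt (T : X → Set X) (x v : X) : Prop :=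
  ∃ U ∈ 𝓝 x, ∃ V ∈ 𝓝 v, ∃ G : X → Set X, MaxMono G ∧
    gph G ∩ U ×ˢ V = gph T ∩ U ×ˢ V

/-- Locally monotone around a graph point. -/
def LocMonoAt (T : X → Set X) (x v : X) : Prop :=
  ∃ U ∈ 𝓝 x, ∃ V ∈ 𝓝 v, ∃ G : X → Set X, Mono G ∧
    gph G ∩ U ×ˢ V = gph T ∩ U ×ˢ V

/-- Locally strongly maximal monotone of type (A) around a graph point with modulus σ. -/
def LocStrMaxAAt (σ : ℝ) (T : X → Set X) (x v : X) : Prop :=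
  ∃ U ∈ 𝓝 x, ∃ V ∈ 𝓝 v, StrMonoOn' σ T (U ×ˢ V) ∧
    ∀ S : X → Set X, MonoOn' S (U ×ˢ V) → gph T ∩ U ×ˢ V ⊆ gph S ∩ U ×ˢ V →
      gph S ∩ U ×ˢ V = gph T ∩ U ×ˢ V

/-- Locally strongly maximal monotone of type (B) around a graph point with modulus σ. -/
def LocStrMaxBAt (σ : ℝ) (T : X → Set X) (x v : X) : Prop :=
  ∃ U ∈ 𝓝 x, ∃ V ∈ 𝓝 v, ∃ G : X → Set X, StrMaxMono σ G ∧
    gph G ∩ U ×ˢ V = gph T ∩ U ×ˢ V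

/-- Pointwise sum of set-valued maps. -/
def addMap (T S : X → Set X) : X → Set X :=
  fun x => {v | ∃ a ∈ T x, ∃ b ∈ S x, v = a + b}

/-- The shift `T + σ I`. -/
def shiftI (σ : ℝ) (T : X → Set X) : X → Set X :=
  fun x => (fun v => v + σ • x) '' T x

/-- Set-valued inverse. -/
def invMap (T : X → Set X) : X → Set X := fun v => {x | v ∈ T x}

/-- Resolvent `(I + λ T)⁻¹` as a set-valued map. -/
def res (lam : ℝ) (T : X → Set X) : X → Set X :=
  fun y => {x | ∃ v ∈ T x, y = x + lam • v}

/-- `F` has a single-valued localization around `(ȳ, x̄) ∈ gph F`. -/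
def HasSVLoc (F : X → Set X) (ybar xbar : X) : Prop :=
  ∃ W ∈ 𝓝 ybar, ∃ Q ∈ 𝓝 xbar, ∃ f : X → X, (∀ y ∈ W, f y ∈ Q) ∧
    ∀ y x, (x ∈ F y ∧ y ∈ W ∧ x ∈ Q) ↔ (y ∈ W ∧ x = f y)

/-- `F` has a continuous single-valued localization around `(ȳ, x̄) ∈ gph F`. -/
def HasCSVLoc (F : X → Set X) (ybar xbar : X) : Prop :=
  ∃ W ∈ 𝓝 ybar, ∃ Q ∈ 𝓝 xbar, ∃ f : X → X, ContinuousOn f W ∧ (∀ y ∈ W, f y ∈ Q) ∧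
    ∀ y x, (x ∈ F y ∧ y ∈ W ∧ x ∈ Q) ↔ (y ∈ W ∧ x = f y)

/-- Hypomonotone with modulus `r` with respect to `W`. -/
def HypoOn (r : ℝ) (T : X → Set X) (W : Set (X × X)) : Prop :=
  ∀ p ∈ gph T ∩ W, ∀ q ∈ gph T ∩ W,
    -(r * ‖p.1 - q.1‖ ^ 2) ≤ ⟪p.2 - q.2, p.1 - q.1⟫

/-- Locally hypomonotone with modulus `r` around a graph point. -/
def LocHypoAt (r : ℝ) (T : X → Set X) (x v : X) : Prop :=
  ∃ W ∈ 𝓝 ((x, v) : X × X), HypoOn r T W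

/-- The regular (Fréchet) normal cone to `Ω ⊆ X × X` at `p`, using the sum norm. -/
def rnc (Ω : Set (X × X)) (p : X × X) : Set (X × X) :=
  {q | ∀ ε > 0, ∀ᶠ u in 𝓝[Ω] p,
    ⟪q.1, u.1 - p.1⟫ + ⟪q.2, u.2 - p.2⟫ ≤ ε * (‖u.1 - p.1‖ + ‖u.2 - p.2‖)}

/-- The regular coderivative of `F` at `(x, v) ∈ gph F` applied to `w`. -/
def coderiv (F : X → Set X) (x v w : X) : Set X :=
  {z | ((z, -w) : X × X) ∈ rnc (gph F) (x, v)}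

/-- The graph of `T` is locally closed around `p`. -/
def LocClosedAt (Ω : Set (X × X)) (p : X × X) : Prop :=
  ∃ ε > 0, IsClosed (Ω ∩ Metric.closedBall p ε)

/-!
(A) ⇒ (B): by Zorn's lemma `gph T ∩ U × V` extends to a maximal monotone graph, and maximality
within `U × V` forbids any new point there.

(B) ⇒ (A): let `G` be maximal monotone with `(0, 0)` in its graph, and let `p = (a, b)` lie in a box
`ball 0 r × ball 0 s` and be monotonically related to the part of the graph in that box. Choose
`d > 0` with `‖a + d b‖ < r` and put `c = a + d b`. By Minty's theorem each `k > 0` gives a graph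
point `(y k, w k)` with `y k + k w k = c`; it depends continuously on `k`, satisfies `‖y k‖ ≤ ‖c‖`,
and `w k → 0` as `k → ∞`. If `k ≥ d` and `‖w k‖ < s`, this point lies in the box, hence is related
to `p`, which forces `‖w k‖ ≤ ‖b‖`. So for `k ≥ d` the continuous function `‖w k‖` never takes a
value strictly between `‖b‖` and `s`; as it tends to `0`, it stays below `s` down to `k = d`.
Then `(y d, w d)` is related to `p` and has the same resolvent point `c`, so it equals `p`.

For Minty's theorem, solving `x + v = 0` amounts to finding a common point of the balls whose
diameters are the segments from `a` to `-b`, over all graph points `(a, b)`. Weak compactness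
reduces this to finitely many balls, for which a saddle point of `∑ i, w i * ⟪x + b i, x - a i⟫` on
`convexHull {a i} × stdSimplex` supplies the common point.
-/

section MonotonePolar

variable {H : Type*} [NormedAddCommGroup H] [InnerProductSpace ℝ H] {A B W : Set (H × H)}
  {p : H × H}

/-- The monotone polar of `A`: the pairs that are monotonically related to every pair in `A`.
A graph is monotone iff it is contained in its monotone polar, and maximal monotone iff it is equal
to it. -/
def monotonePolar (A : Set (H × H)) : Set (H × H) :=
  {p | ∀ q ∈ A, 0 ≤ ⟪p.2 - q.2, p.1 - q.1⟫}

theorem monotonePolar_anti (h : A ⊆ B) : monotonePolar B ⊆ monotonePolar A :=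
  fun _ hp q hq => hp q (h hq)

theorem insert_subset_monotonePolar_insert (hA : A ⊆ monotonePolar A) (hp : p ∈ monotonePolar A) :
    insert p A ⊆ monotonePolar (insert p A) := by
  rintro a (rfl | ha) b (rfl | hb)
  · simp
  · exact hp b hb
  · rw [← inner_neg_neg, neg_sub, neg_sub]
    exact hp a ha
  · exact hA ha b hb

theorem monotonePolar_preimage (e : H × H ≃ H × H) {κ : ℝ} (hκ : 0 < κ)
    (he : ∀ p q : H × H,
      ⟪(e p).2 - (e q).2, (e p).1 - (e q).1⟫ = κ * ⟪p.2 - q.2, p.1 - q.1⟫) :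
    monotonePolar (e ⁻¹' A) = e ⁻¹' monotonePolar A := by
  ext p
  refine e.forall_congr fun q => imp_congr Iff.rfl ?_
  rw [he, mul_nonneg_iff_of_pos_left hκ]

theorem locMaxA_iff_monotonePolar_inter_eq {T : H → Set H} :
    LocMaxA T W ↔ monotonePolar (gph T ∩ W) ∩ W = gph T ∩ W := by
  refine ⟨fun ⟨hmono, hmax⟩ => Subset.antisymm (fun p hp => ?_) fun p hp => ⟨hmono p hp, hp.2⟩,
    fun h => ⟨fun p hp => (h.ge hp).1, fun S hS hTS => hTS.antisymm' fun p hp => ?_⟩⟩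
  · let S : H → Set H := fun x => Prod.mk x ⁻¹' insert p (gph T ∩ W)
    have hSW : gph S ∩ W = insert p (gph T ∩ W) :=
      inter_eq_left.2 (insert_subset hp.2 inter_subset_right)
    have hS : MonoOn' S W := by
      have := insert_subset_monotonePolar_insert hmono hp.1
      rwa [← hSW] at this
    rw [← hmax S hS (hSW ▸ subset_insert _ _), hSW]
    exact mem_insert _ _
  · exact h.le ⟨monotonePolar_anti hTS (hS p hp), hp.2⟩

theorem maxMono_iff_monotonePolar_gph_eq {T : H → Set H} :
    MaxMono T ↔ monotonePolar (gph T) = gph T := by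
  simpa only [MaxMono, Mono, LocMaxA, MonoOn', inter_univ] using
    locMaxA_iff_monotonePolar_inter_eq (T := T) (W := univ)

theorem exists_maxMono_subset_gph (hA : A ⊆ monotonePolar A) :
    ∃ G : H → Set H, MaxMono G ∧ A ⊆ gph G := by
  have hchain : ∀ c ⊆ {B : Set (H × H) | B ⊆ monotonePolar B}, IsChain (· ⊆ ·) c →
      ⋃₀ c ⊆ monotonePolar (⋃₀ c) := by
    rintro c hc hchain p ⟨s, hs, hps⟩ q ⟨t, ht, hqt⟩
    rcases hchain.total hs ht with hst | hts
    · exact hc ht (hst hps) q hqt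
    · exact hc hs hps q (hts hqt)
  obtain ⟨M, hAM, hM⟩ := zorn_subset_nonempty {B : Set (H × H) | B ⊆ monotonePolar B}
    (fun c hc hcc _ => ⟨⋃₀ c, hchain c hc hcc, fun _ => subset_sUnion_of_mem⟩) A hA
  exact ⟨fun x => Prod.mk x ⁻¹' M,
    ⟨hM.prop, fun S hS hMS => (hM.le_of_ge hS hMS).antisymm hMS⟩, hAM⟩

end MonotonePolar

section Minty

variable {H : Type*} [NormedAddCommGroup H] [InnerProductSpace ℝ H]

theorem sum_mul_inner_sum_smul_le_zero {ι : Type*} [Fintype ι] {a b : ι → H}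
    (hab : ∀ i j, 0 ≤ ⟪b i - b j, a i - a j⟫) {w : ι → ℝ} (hw : w ∈ stdSimplex ℝ ι) :
    ∑ i, w i * ⟪∑ j, w j • a j + b i, ∑ j, w j • a j - a i⟫ ≤ 0 := by
  set m := ∑ j, w j • a j with hm
  have hexpand : ∀ i, ⟪m + b i, m - a i⟫ = ∑ j, w j * ⟪m + b i, a j - a i⟫ := by
    intro i
    simp_rw [inner_sub_right (m + b i), mul_sub, Finset.sum_sub_distrib, ← Finset.sum_mul, hw.2,
      one_mul, hm, inner_sum, inner_smul_right]
  have hsum : ∑ i, w i * ⟪m + b i, m - a i⟫ = ∑ i, ∑ j, w i * w j * ⟪m + b i, a j - a i⟫ := by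
    simp_rw [hexpand, Finset.mul_sum, mul_assoc]
  have hswap : ∑ i, w i * ⟪m + b i, m - a i⟫ = ∑ i, ∑ j, w i * w j * ⟪m + b j, a i - a j⟫ := by
    rw [hsum, Finset.sum_comm]
    simp_rw [mul_comm (w _) (w _)]
  have hsymm : 2 * ∑ i, w i * ⟪m + b i, m - a i⟫
      = -∑ i, ∑ j, w i * w j * ⟪b i - b j, a i - a j⟫ := by
    rw [two_mul]
    nth_rw 1 [hsum]
    rw [hswap]
    simp_rw [← Finset.sum_add_distrib, ← Finset.sum_neg_distrib]
    refine Finset.sum_congr rfl fun i _ => Finset.sum_congr rfl fun j _ => ?_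
    simp only [inner_add_left, inner_sub_left, inner_sub_right]
    ring
  have hnonneg : 0 ≤ ∑ i, ∑ j, w i * w j * ⟪b i - b j, a i - a j⟫ :=
    Finset.sum_nonneg fun i _ => Finset.sum_nonneg fun j _ =>
      mul_nonneg (mul_nonneg (hw.1 i) (hw.1 j)) (hab i j)
  linarith

theorem convexOn_univ_inner_add_sub (a b : H) : ConvexOn ℝ univ fun x => ⟪x + b, x - a⟫ := by
  refine ⟨convex_univ, fun x _ y _ s t hs ht hst => ?_⟩
  have hgap : s • ⟪x + b, x - a⟫ + t • ⟪y + b, y - a⟫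
      - ⟪s • x + t • y + b, s • x + t • y - a⟫ = s * t * ‖x - y‖ ^ 2 := by
    obtain rfl : t = 1 - s := by linarith
    rw [← real_inner_self_eq_norm_sq]
    simp only [smul_eq_mul, inner_add_left, inner_add_right, inner_sub_left, inner_sub_right,
      real_inner_smul_left, real_inner_smul_right, real_inner_comm x y]
    ring
  have : 0 ≤ s * t * ‖x - y‖ ^ 2 := by positivity
  linarith

theorem exists_forall_inner_add_sub_le_zero {ι : Type*} [Finite ι] {a b : ι → H}
    (hab : ∀ i j, 0 ≤ ⟪b i - b j, a i - a j⟫) : ∃ x, ∀ i, ⟪x + b i, x - a i⟫ ≤ 0 := by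
  classical
  cases nonempty_fintype ι
  cases isEmpty_or_nonempty ι
  · exact ⟨0, isEmptyElim⟩
  let f : H → (ι → ℝ) → ℝ := fun x w => ∑ i, w i * ⟪x + b i, x - a i⟫
  have hconvex : ∀ w ∈ stdSimplex ℝ ι, ConvexOn ℝ (convexHull ℝ (range a)) (f · w) := by
    intro w hw
    have : ConvexOn ℝ univ (∑ i, fun x => w i • ⟪x + b i, x - a i⟫) :=
      Finset.sum_induction _ _ (fun _ _ => ConvexOn.add) (convexOn_const 0 convex_univ)
        fun i _ => (convexOn_univ_inner_add_sub (a i) (b i)).smul (hw.1 i)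
    rw [Finset.sum_fn] at this
    exact this.subset (subset_univ _) (convex_convexHull ℝ _)
  have hconcave : ∀ x, ConcaveOn ℝ (stdSimplex ℝ ι) (f x) := fun x =>
    (Fintype.linearCombination ℝ fun i => ⟪x + b i, x - a i⟫).concaveOn (convex_stdSimplex ℝ ι)
  obtain ⟨x, -, w, hw, hsaddle⟩ : ∃ x ∈ convexHull ℝ (range a), ∃ w ∈ stdSimplex ℝ ι,
      IsSaddlePointOn (convexHull ℝ (range a)) (stdSimplex ℝ ι) f x w :=
    Sion.exists_isSaddlePointOn ((range_nonempty a).convexHull) (convex_convexHull ℝ _)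
      ((finite_range a).isCompact_convexHull ℝ)
      (fun w _ => Continuous.lowerSemicontinuous (by fun_prop) |>.lowerSemicontinuousOn _)
      (fun w hw => (hconvex w hw).quasiconvexOn)
      (convex_stdSimplex ℝ ι) ⟨_, single_mem_stdSimplex ℝ (Classical.arbitrary ι)⟩
      (isCompact_stdSimplex ℝ ι)
      (fun x _ => Continuous.upperSemicontinuous (by fun_prop) |>.upperSemicontinuousOn _)
      (fun x _ => (hconcave x).quasiconcaveOn)
  have hmean : ∑ i, w i • a i ∈ convexHull ℝ (range a) :=
    (convex_convexHull ℝ _).sum_mem (fun i _ => hw.1 i) hw.2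
      fun i _ => subset_convexHull ℝ _ (mem_range_self i)
  refine ⟨x, fun i => ?_⟩
  calc ⟪x + b i, x - a i⟫ = f x (Pi.single i 1) := by simp [f, Pi.single_apply]
    _ ≤ f (∑ j, w j • a j) w := hsaddle _ hmean _ (single_mem_stdSimplex ℝ i)
    _ ≤ 0 := sum_mul_inner_sum_smul_le_zero hab hw

theorem inner_add_sub_le_zero_iff_mem_closedBall (a b x : H) :
    ⟪x + b, x - a⟫ ≤ 0 ↔ x ∈ Metric.closedBall (midpoint ℝ a (-b)) (‖a + b‖ / 2) := by
  have hsq : ‖x - midpoint ℝ a (-b)‖ ^ 2 = ⟪x + b, x - a⟫ + (‖a + b‖ / 2) ^ 2 := by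
    rw [midpoint_eq_smul_add, div_pow, ← real_inner_self_eq_norm_sq, ← real_inner_self_eq_norm_sq]
    simp only [invOf_eq_inv, inner_add_left, inner_add_right, inner_sub_left, inner_sub_right,
      inner_neg_left, inner_neg_right, real_inner_smul_left, real_inner_smul_right,
      real_inner_comm x a, real_inner_comm x b, real_inner_comm a b]
    ring
  rw [mem_closedBall_iff_norm, ← sq_le_sq₀ (norm_nonneg _) (by positivity), hsq,
    add_le_iff_nonpos_left]

variable [CompleteSpace H]

theorem iInter_closedBall_nonempty_of_finset {ι : Type*} {c : ι → H} {r : ι → ℝ}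
    (h : ∀ s : Finset ι, (⋂ i ∈ s, Metric.closedBall (c i) (r i)).Nonempty) :
    (⋂ i, Metric.closedBall (c i) (r i)).Nonempty := by
  classical
  rcases isEmpty_or_nonempty ι with _ | ⟨⟨i₀⟩⟩
  · simp
  let e : H ≃ₗᵢ[ℝ] StrongDual ℝ H := InnerProductSpace.toDual ℝ H
  let K : ι → Set (WeakDual ℝ H) := fun i =>
    WeakDual.toStrongDual ⁻¹' Metric.closedBall (e (c i)) (r i)
  obtain ⟨φ, -, hφ⟩ := (WeakDual.isCompact_closedBall (e (c i₀)) (r i₀)).inter_iInter_nonempty K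
    (fun i => WeakDual.isClosed_closedBall _ _) fun s => by
      obtain ⟨x, hx⟩ := h (insert i₀ s)
      have hxK : ∀ i ∈ insert i₀ s, StrongDual.toWeakDual (e x) ∈ K i := fun i hi =>
        (e.dist_map x (c i)).trans_le (mem_iInter₂.1 hx i hi)
      exact ⟨_, hxK i₀ (s.mem_insert_self i₀),
        mem_iInter₂.2 fun i hi => hxK i (Finset.mem_insert_of_mem hi)⟩
  refine ⟨e.symm (WeakDual.toStrongDual φ), mem_iInter.2 fun i => ?_⟩
  rw [Metric.mem_closedBall, ← e.dist_map, e.apply_symm_apply]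
  exact mem_iInter.1 hφ i

theorem exists_add_eq_zero_mem_monotonePolar {A : Set (H × H)} (hA : A ⊆ monotonePolar A) :
    ∃ p ∈ monotonePolar A, p.1 + p.2 = 0 := by
  obtain ⟨x, hx⟩ : (⋂ q : A, Metric.closedBall (midpoint ℝ q.1.1 (-q.1.2))
      (‖q.1.1 + q.1.2‖ / 2)).Nonempty := by
    refine iInter_closedBall_nonempty_of_finset fun s => ?_
    obtain ⟨x, hx⟩ := exists_forall_inner_add_sub_le_zero (ι := s)
      (a := fun q => q.1.1.1) (b := fun q => q.1.1.2) fun q q' => hA q.1.2 _ q'.1.2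
    exact ⟨x, mem_iInter₂.2 fun q hq =>
      (inner_add_sub_le_zero_iff_mem_closedBall _ _ x).1 (hx ⟨q, hq⟩)⟩
  refine ⟨(x, -x), fun q hq => ?_, add_neg_cancel x⟩
  have hxq := (inner_add_sub_le_zero_iff_mem_closedBall q.1 q.2 x).2 (mem_iInter.1 hx ⟨q, hq⟩)
  rwa [← neg_add', inner_neg_left, Left.nonneg_neg_iff]

theorem exists_add_smul_eq_mem_monotonePolar {A : Set (H × H)} (hA : A ⊆ monotonePolar A) {k : ℝ}
    (hk : 0 < k) (c : H) : ∃ p ∈ monotonePolar A, p.1 + k • p.2 = c := by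
  let e : H × H ≃ H × H := (Equiv.addRight c).prodCongr (Equiv.smulRight (inv_ne_zero hk.ne'))
  have hpolar : monotonePolar (e ⁻¹' A) = e ⁻¹' monotonePolar A :=
    monotonePolar_preimage e (inv_pos.2 hk) fun p q => by
      simp [e, ← smul_sub, real_inner_smul_left]
  obtain ⟨p, hp, hp0⟩ := exists_add_eq_zero_mem_monotonePolar (A := e ⁻¹' A)
    (hpolar ▸ preimage_mono hA)
  rw [hpolar] at hp
  refine ⟨e p, hp, ?_⟩
  simp [e, smul_smul, hk.ne', add_right_comm p.1 c, hp0]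

end Minty

section Localization

variable {H : Type*} [NormedAddCommGroup H] [InnerProductSpace ℝ H]

section Resolvent

variable {y w y' w' : H} {k l : ℝ}

theorem norm_sq_add_sq_le_of_inner_nonneg (hk : 0 ≤ k) (h : 0 ≤ ⟪w, y⟫) :
    ‖y‖ ^ 2 + (k * ‖w‖) ^ 2 ≤ ‖y + k • w‖ ^ 2 := by
  rw [norm_add_sq_real, norm_smul, Real.norm_of_nonneg hk, real_inner_smul_right,
    real_inner_comm]
  have := mul_nonneg hk h
  linarith

theorem norm_le_norm_add_smul_of_inner_nonneg (hk : 0 ≤ k) (h : 0 ≤ ⟪w, y⟫) :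
    ‖y‖ ≤ ‖y + k • w‖ :=
  le_of_sq_le_sq (le_of_add_le_of_nonneg_left (norm_sq_add_sq_le_of_inner_nonneg hk h)
    (sq_nonneg _)) (norm_nonneg _)

theorem mul_norm_le_norm_add_smul_of_inner_nonneg (hk : 0 ≤ k) (h : 0 ≤ ⟪w, y⟫) :
    k * ‖w‖ ≤ ‖y + k • w‖ :=
  le_of_sq_le_sq (le_of_add_le_of_nonneg_right (norm_sq_add_sq_le_of_inner_nonneg hk h)
    (sq_nonneg _)) (norm_nonneg _)

theorem mul_norm_sub_le_of_add_smul_eq (h : y + k • w = y' + l • w')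
    (hmono : 0 ≤ ⟪w - w', y - y'⟫) : k * ‖w - w'‖ ≤ |k - l| * ‖w'‖ := by
  have hy : y - y' = (l - k) • w' - k • (w - w') := by
    rw [eq_sub_of_add_eq h]
    module
  have hsq : k * ‖w - w'‖ ^ 2 ≤ |k - l| * ‖w'‖ * ‖w - w'‖ := by
    rw [hy, inner_sub_right, real_inner_smul_right, real_inner_smul_right,
      real_inner_self_eq_norm_sq, sub_nonneg] at hmono
    calc k * ‖w - w'‖ ^ 2 ≤ (l - k) * ⟪w - w', w'⟫ := hmono
      _ ≤ |l - k| * |⟪w - w', w'⟫| := by rw [← abs_mul]; exact le_abs_self _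
      _ ≤ |l - k| * (‖w - w'‖ * ‖w'‖) := by gcongr; exact abs_real_inner_le_norm _ _
      _ = |k - l| * ‖w'‖ * ‖w - w'‖ := by rw [abs_sub_comm]; ring
  rcases (norm_nonneg (w - w')).eq_or_lt with h0 | hpos
  · rw [← h0, mul_zero]
    positivity
  · exact le_of_mul_le_mul_right (by linarith) hpos

theorem eq_and_eq_of_add_smul_eq (hk : 0 < k) (h : y + k • w = y' + k • w')
    (hmono : 0 ≤ ⟪w - w', y - y'⟫) : y = y' ∧ w = w' := by
  have hle := mul_norm_sub_le_of_add_smul_eq h hmono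
  rw [sub_self, abs_zero, zero_mul] at hle
  have hw : w = w' := sub_eq_zero.1 (norm_le_zero_iff.1 (nonpos_of_mul_nonpos_right hle hk))
  subst hw
  exact ⟨add_right_cancel h, rfl⟩

theorem norm_le_norm_of_add_smul_eq (hk : 0 < k) (hkl : k ≤ l) (h : y + k • w = y' + l • w')
    (hmono : 0 ≤ ⟪w - w', y - y'⟫) : ‖w'‖ ≤ ‖w‖ := by
  by_contra! hlt
  have hy : y - y' = l • w' - k • w := by
    rw [eq_sub_of_add_eq h]
    module
  have hprod : 0 ≤ (‖w‖ - ‖w'‖) * (l * ‖w'‖ - k * ‖w‖) :=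
    calc 0 ≤ ⟪w - w', y - y'⟫ := hmono
      _ = (k + l) * ⟪w, w'⟫ - l * ‖w'‖ ^ 2 - k * ‖w‖ ^ 2 := by
        simp only [hy, inner_sub_left, inner_sub_right, real_inner_smul_right,
          real_inner_self_eq_norm_sq, real_inner_comm w w']
        ring
      _ ≤ (k + l) * (‖w‖ * ‖w'‖) - l * ‖w'‖ ^ 2 - k * ‖w‖ ^ 2 := by
        gcongr
        · linarith
        · exact real_inner_le_norm w w'
      _ = (‖w‖ - ‖w'‖) * (l * ‖w'‖ - k * ‖w‖) := by ring
  have hpos : k * ‖w‖ < l * ‖w'‖ :=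
    calc k * ‖w‖ < k * ‖w'‖ := by gcongr
      _ ≤ l * ‖w'‖ := by gcongr
  exact hprod.not_gt (mul_neg_of_neg_of_pos (sub_neg.2 hlt) (sub_pos.2 hpos))

end Resolvent

variable {A : Set (H × H)} {r s d R : ℝ}

theorem continuousOn_snd_of_add_smul_eq {z : ℝ → H × H} {c : H} (hA : A ⊆ monotonePolar A)
    (hzA : ∀ k, 0 < k → z k ∈ A) (hzc : ∀ k, 0 < k → (z k).1 + k • (z k).2 = c) :
    ContinuousOn (fun k => (z k).2) (Ioi 0) := by
  intro l hl
  have hbound : ∀ k ∈ Ioi (0 : ℝ), ‖(z k).2 - (z l).2‖ ≤ |k - l| * ‖(z l).2‖ / k := fun k hk => by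
    rw [le_div_iff₀' hk]
    exact mul_norm_sub_le_of_add_smul_eq ((hzc k hk).trans (hzc l hl).symm)
      (hA (hzA k hk) _ (hzA l hl))
  have hcont : ContinuousAt (fun k => |k - l| * ‖(z l).2‖ / k) l := by
    fun_prop (disch := exact hl.ne')
  have hlim : Tendsto (fun k => |k - l| * ‖(z l).2‖ / k) (𝓝[Ioi 0] l) (𝓝 0) := by
    simpa using hcont.tendsto.mono_left nhdsWithin_le_nhds
  exact tendsto_iff_norm_sub_tendsto_zero.2 <| squeeze_zero' (.of_forall fun _ => norm_nonneg _)
    (eventually_mem_nhdsWithin.mono hbound) hlim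

variable [CompleteSpace H]

theorem exists_add_smul_eq_norm_snd_eq {p : H × H} (hA : monotonePolar A = A) (h0 : 0 ∈ A)
    (hd : 0 < d) (hR : 0 < R) (hp : p ∈ A) (hRp : R ≤ ‖p.2‖) :
    ∃ k ≥ d, ∃ q ∈ A, q.1 + k • q.2 = p.1 + d • p.2 ∧ ‖q.2‖ = R := by
  set c := p.1 + d • p.2
  have hminty : ∀ k : ℝ, ∃ q, 0 < k → q ∈ A ∧ q.1 + k • q.2 = c := fun k => by
    by_cases hk : 0 < k
    · obtain ⟨q, hq, hqc⟩ := exists_add_smul_eq_mem_monotonePolar hA.ge hk c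
      exact ⟨q, fun _ => ⟨hA ▸ hq, hqc⟩⟩
    · exact ⟨0, fun h => absurd h hk⟩
  choose z hz using hminty
  have hzA : ∀ k, 0 < k → z k ∈ A := fun k hk => (hz k hk).1
  have hzc : ∀ k, 0 < k → (z k).1 + k • (z k).2 = c := fun k hk => (hz k hk).2
  have hzd : (z d).2 = p.2 :=
    (eq_and_eq_of_add_smul_eq hd (hzc d hd) (hA.ge (hzA d hd) p hp)).2
  let K := max d (‖c‖ / R)
  have hK : 0 < K := hd.trans_le (le_max_left _ _)
  have hzK : ‖(z K).2‖ ≤ R := by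
    have hinner : 0 ≤ ⟪(z K).2, (z K).1⟫ := by simpa using hA.ge (hzA K hK) 0 h0
    refine le_of_mul_le_mul_left ?_ hK
    calc K * ‖(z K).2‖ ≤ ‖c‖ :=
          hzc K hK ▸ mul_norm_le_norm_add_smul_of_inner_nonneg hK.le hinner
      _ ≤ K * R := (div_le_iff₀ hR).1 (le_max_right _ _)
  have hcont : ContinuousOn (fun k => ‖(z k).2‖) (Icc d K) :=
    (continuousOn_snd_of_add_smul_eq hA.ge hzA hzc).norm.mono fun k hk => hd.trans_le hk.1
  obtain ⟨k, hk, hkR⟩ := intermediate_value_Icc' (le_max_left _ _) hcont ⟨hzK, hzd ▸ hRp⟩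
  have hkpos := hd.trans_le hk.1
  exact ⟨k, hk.1, z k, hzA k hkpos, hzc k hkpos, hkR⟩

theorem mem_of_mem_monotonePolar_inter_ball_zero {p : H × H} (hA : monotonePolar A = A)
    (h0 : 0 ∈ A) (hp : p ∈ monotonePolar (A ∩ Metric.ball 0 r ×ˢ Metric.ball 0 s))
    (hpr : ‖p.1‖ < r) (hps : ‖p.2‖ < s) : p ∈ A := by
  obtain ⟨d, hd, hdr⟩ := exists_pos_mul_lt (sub_pos.2 hpr) ‖p.2‖
  have hcr : ‖p.1 + d • p.2‖ < r := by
    have := norm_add_le p.1 (d • p.2)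
    rw [norm_smul, Real.norm_of_nonneg hd.le] at this
    linarith
  have hrel : ∀ k ≥ d, ∀ q ∈ A, q.1 + k • q.2 = p.1 + d • p.2 → ‖q.2‖ < s →
      0 ≤ ⟪p.2 - q.2, p.1 - q.1⟫ := fun k hk q hq hqc hqs => by
    have hinner : 0 ≤ ⟪q.2, q.1⟫ := by simpa using hA.ge hq 0 h0
    have hqr : ‖q.1‖ ≤ ‖p.1 + d • p.2‖ :=
      hqc ▸ norm_le_norm_add_smul_of_inner_nonneg (hd.le.trans hk) hinner
    exact hp q ⟨hq, mem_ball_zero_iff.2 (hqr.trans_lt hcr), mem_ball_zero_iff.2 hqs⟩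
  obtain ⟨q, hqA, hqc⟩ := exists_add_smul_eq_mem_monotonePolar hA.ge hd (p.1 + d • p.2)
  rw [hA] at hqA
  have hqs : ‖q.2‖ < s := by
    by_contra! hsq
    obtain ⟨R, hpR, hRs⟩ := exists_between hps
    obtain ⟨k, hk, q', hq'A, hq'c, hq'R⟩ := exists_add_smul_eq_norm_snd_eq hA h0 hd
      ((norm_nonneg _).trans_lt hpR) hqA (hRs.le.trans hsq)
    rw [hqc] at hq'c
    have hq'p : ‖q'.2‖ ≤ ‖p.2‖ :=
      norm_le_norm_of_add_smul_eq hd hk hq'c.symm (hrel k hk q' hq'A hq'c (hq'R ▸ hRs))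
    exact hpR.not_ge (hq'R ▸ hq'p)
  obtain ⟨h₁, h₂⟩ := eq_and_eq_of_add_smul_eq hd hqc.symm (hrel d le_rfl q hqA hqc hqs)
  rwa [Prod.ext h₁ h₂]

theorem monotonePolar_inter_ball_prod_inter_eq {x v : H} (hA : monotonePolar A = A)
    (hxv : (x, v) ∈ A) (r s : ℝ) :
    monotonePolar (A ∩ Metric.ball x r ×ˢ Metric.ball v s) ∩ Metric.ball x r ×ˢ Metric.ball v s =
      A ∩ Metric.ball x r ×ˢ Metric.ball v s := by
  refine Subset.antisymm (fun p ⟨hp, hpx, hpv⟩ => ⟨?_, hpx, hpv⟩)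
    fun p ⟨hpA, hpW⟩ => ⟨monotonePolar_anti inter_subset_left (hA.ge hpA), hpW⟩
  let e := Equiv.addRight (x, v)
  have hpolar (B : Set (H × H)) : monotonePolar (e ⁻¹' B) = e ⁻¹' monotonePolar B :=
    monotonePolar_preimage e one_pos fun p q => by simp [e]
  have hball : e ⁻¹' (Metric.ball x r ×ˢ Metric.ball v s) = Metric.ball 0 r ×ˢ Metric.ball 0 s := by
    ext q
    simp [e, dist_eq_norm]
  have hmem : e.symm p ∈ e ⁻¹' A :=
    mem_of_mem_monotonePolar_inter_ball_zero (r := r) (s := s) (by rw [hpolar, hA])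
      (by simpa [e] using hxv)
      (by rw [← hball, ← preimage_inter, hpolar]; simpa using hp)
      (by simpa [e, sub_eq_add_neg] using mem_ball_iff_norm.1 hpx)
      (by simpa [e, sub_eq_add_neg] using mem_ball_iff_norm.1 hpv)
  simpa using hmem

end Localization

/-- In a Hilbert space, local maximal monotonicity of type (A) around a graph point
is equivalent to local maximal monotonicity of type (B) around that point. -/
theorem stmt_8 (T : X → Set X) (xbar vbar : X) (hx : vbar ∈ T xbar) :
    LocMaxAAt T xbar vbar ↔ LocMaxBAt T xbar vbar := by
  constructor
  · rintro ⟨U, hU, V, hV, hmono, hmax⟩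
    obtain ⟨G, hG, hTG⟩ := exists_maxMono_subset_gph hmono
    exact ⟨U, hU, V, hV, G, hG, hmax G (fun p hp q hq => hG.1 p hp.1 q hq.1)
      (subset_inter hTG inter_subset_right)⟩
  · rintro ⟨U, hU, V, hV, G, hG, hGT⟩
    obtain ⟨r, hr, hrU⟩ := Metric.mem_nhds_iff.1 hU
    obtain ⟨s, hs, hsV⟩ := Metric.mem_nhds_iff.1 hV
    have hxG : (xbar, vbar) ∈ gph G :=
      (hGT.ge ⟨hx, mem_of_mem_nhds hU, mem_of_mem_nhds hV⟩).1
    have hGT' : gph G ∩ Metric.ball xbar r ×ˢ Metric.ball vbar s =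
        gph T ∩ Metric.ball xbar r ×ˢ Metric.ball vbar s := by
      rw [← inter_eq_right.2 (prod_mono hrU hsV), ← inter_assoc, hGT, inter_assoc]
    refine ⟨_, Metric.ball_mem_nhds _ hr, _, Metric.ball_mem_nhds _ hs,
      locMaxA_iff_monotonePolar_inter_eq.2 ?_⟩
    rw [← hGT']
    exact monotonePolar_inter_ball_prod_inter_eq (maxMono_iff_monotonePolar_gph_eq.1 hG) hxG r s
end

section
/- Let X be a Hilbert space, σ > 0, and T : X ⇉ X locally strongly maximal monotone of type (A) around (x̄, x̄*) ∈ gph T with modulus σ. Then T − σI is locally maximal monotone of type (A) around (x̄, x̄* − σx̄). -/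
open Set Filter Topology RealInnerProductSpace

variable {X : Type*} [NormedAddCommGroup X] [InnerProductSpace ℝ X] [CompleteSpace X]

/-!
Subtracting `σI` shears the graph of `T` and turns `σ`-strong monotonicity into monotonicity, so
the sheared graph is maximal monotone in the sheared neighbourhood. That neighbourhood is not a
product, and the point is to pass to a smaller box centred at the graph point. Let `(x, v)` in the
box be monotonically related to the part of the graph inside the box. Sion's minimax theorem over
the weakly compact closed box, played against the convexified graph, produces a graph point
`(y, w)` in the box with `v ∈ w + N(y) + ε ∂‖· - x‖(y)`, where `N` is the normal cone of the ball.
Testing at `x`, and using that `(x, v)` and `(y, w)` are related, gives `y = x`, hence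
`‖v - w‖ ≤ ε`. Letting `ε → 0`, `(x, v)` is a limit of graph points over `x`, so it is monotonically
related to the whole graph and belongs to it.
-/

open scoped NNReal

section WeakTopology

variable {V : Type*} [AddCommGroup V] [Module ℝ V] [TopologicalSpace V]

theorem quasiconvexOn_toWeakSpace_symm {K : Set V} {g : V → ℝ} (hg : QuasiconvexOn ℝ K g) :
    QuasiconvexOn ℝ (toWeakSpace ℝ V '' K) (g ∘ (toWeakSpace ℝ V).symm) := by
  intro c
  convert! (hg c).linear_image (toWeakSpace ℝ V).toLinearMap
  ext x
  simp [LinearEquiv.image_eq_preimage_symm]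

variable [IsTopologicalAddGroup V] [ContinuousSMul ℝ V] [LocallyConvexSpace ℝ V]

theorem isClosed_toWeakSpace_image {K : Set V} (hK : Convex ℝ K) (hK' : IsClosed K) :
    IsClosed (toWeakSpace ℝ V '' K) := by
  rw [← hK'.closure_eq, hK.toWeakSpace_closure ℝ]
  exact isClosed_closure

theorem lowerSemicontinuousOn_toWeakSpace_symm {K : Set V} {g : V → ℝ} (hK : IsClosed K)
    (hg : QuasiconvexOn ℝ K g) (hg' : LowerSemicontinuousOn g K) :
    LowerSemicontinuousOn (g ∘ (toWeakSpace ℝ V).symm) (toWeakSpace ℝ V '' K) := by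
  rw [lowerSemicontinuousOn_iff_preimage_Iic] at hg' ⊢
  intro c
  obtain ⟨u, hu, hKu⟩ := hg' c
  have sublevel_closed : IsClosed {x ∈ K | g x ≤ c} := by
    change IsClosed (K ∩ g ⁻¹' Iic c)
    rw [hKu]
    exact hK.inter hu
  refine ⟨_, isClosed_toWeakSpace_image (hg c) sublevel_closed, ?_⟩
  ext x
  simp [LinearEquiv.image_eq_preimage_symm]

end WeakTopology

section Minimax

variable {H : Type*} [NormedAddCommGroup H] [InnerProductSpace ℝ H] [CompleteSpace H]

theorem isCompact_toWeakSpace_image_closedBall (r : ℝ) :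
    IsCompact (toWeakSpace ℝ H '' Metric.closedBall 0 r) := by
  let riesz : WeakDual ℝ H → WeakSpace ℝ H := fun φ =>
    toWeakSpace ℝ H ((InnerProductSpace.toDual ℝ H).symm (WeakDual.toStrongDual φ))
  have riesz_continuous : Continuous riesz := by
    refine WeakBilin.continuous_of_continuous_eval _ fun ψ => ?_
    convert! WeakDual.eval_continuous ((InnerProductSpace.toDual ℝ H).symm ψ) using 2 with φ
    change ψ ((InnerProductSpace.toDual ℝ H).symm (WeakDual.toStrongDual φ)) =
      WeakDual.toStrongDual φ _
    rw [← InnerProductSpace.toDual_symm_apply, real_inner_comm,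
      InnerProductSpace.toDual_symm_apply]
  convert! (WeakDual.isCompact_closedBall (𝕜 := ℝ) (E := H) 0 r).image riesz_continuous
  ext x
  constructor
  · rintro ⟨x, hx, rfl⟩
    exact ⟨StrongDual.toWeakDual (InnerProductSpace.toDual ℝ H x), by simpa using hx,
      by simp [riesz]⟩
  · rintro ⟨φ, hφ, rfl⟩
    exact ⟨_, by simpa using hφ, rfl⟩

theorem isCompact_toWeakSpace_image {K : Set H} (hK : Convex ℝ K) (hKc : IsClosed K)
    (hKb : Bornology.IsBounded K) : IsCompact (toWeakSpace ℝ H '' K) := by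
  obtain ⟨r, hr⟩ := hKb.subset_closedBall 0
  exact (isCompact_toWeakSpace_image_closedBall r).of_isClosed_subset
    (isClosed_toWeakSpace_image hK hKc) (image_mono hr)

theorem exists_forall_le_of_forall_exists_le_of_isCompact
    {E F : Type*} [AddCommGroup E] [Module ℝ E] [TopologicalSpace E] [IsTopologicalAddGroup E]
    [ContinuousSMul ℝ E] [AddCommGroup F] [Module ℝ F] [TopologicalSpace F]
    [IsTopologicalAddGroup F] [ContinuousSMul ℝ F] {K : Set E} {Y : Set F} {g : E → F → ℝ}
    (hKne : K.Nonempty) (hK : Convex ℝ K) (hKc : IsCompact K) (hY : Convex ℝ Y)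
    (hg_lsc : ∀ y ∈ Y, LowerSemicontinuousOn (g · y) K)
    (hg_convex : ∀ y ∈ Y, QuasiconvexOn ℝ K (g · y))
    (hg_usc : ∀ x ∈ K, UpperSemicontinuousOn (g x) Y)
    (hg_concave : ∀ x ∈ K, QuasiconcaveOn ℝ Y (g x)) {t : ℝ}
    (h : ∀ y ∈ Y, ∃ x ∈ K, g x y ≤ t) : ∃ x ∈ K, ∀ y ∈ Y, g x y ≤ t := by
  by_contra! hcon
  choose! η η_mem lt_η using hcon
  obtain ⟨s, hsK, hs⟩ := hKc.elim_nhdsWithin_subcover (fun x => {x' | t < g x' (η x)})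
    fun x hx => hg_lsc _ (η_mem x hx) x hx t (lt_η x hx)
  obtain ⟨y, hy, hty⟩ := Sion.exists_lt_iInf_of_lt_iInf_of_finite hKne hKc hg_lsc hg_convex hY
    hg_usc hg_concave hK (s.finite_toSet.image η)
    (image_subset_iff.2 fun x hx => η_mem x (hsK x hx)) (t := t) fun x hx => by simpa using hs hx
  obtain ⟨x, hx, hxt⟩ := h y hy
  exact (hty x hx).not_ge hxt

theorem exists_forall_le_of_forall_exists_le
    {F : Type*} [AddCommGroup F] [Module ℝ F] [TopologicalSpace F] [IsTopologicalAddGroup F]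
    [ContinuousSMul ℝ F] {K : Set H} {Y : Set F} {g : H → F → ℝ}
    (hKne : K.Nonempty) (hK : Convex ℝ K) (hKc : IsClosed K) (hKb : Bornology.IsBounded K)
    (hY : Convex ℝ Y)
    (hg_lsc : ∀ y ∈ Y, LowerSemicontinuousOn (g · y) K)
    (hg_convex : ∀ y ∈ Y, QuasiconvexOn ℝ K (g · y))
    (hg_usc : ∀ x ∈ K, UpperSemicontinuousOn (g x) Y)
    (hg_concave : ∀ x ∈ K, QuasiconcaveOn ℝ Y (g x)) {t : ℝ}
    (h : ∀ y ∈ Y, ∃ x ∈ K, g x y ≤ t) : ∃ x ∈ K, ∀ y ∈ Y, g x y ≤ t := by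
  have weak := exists_forall_le_of_forall_exists_le_of_isCompact
    (g := g ∘ (toWeakSpace ℝ H).symm) (t := t) (hKne.image (toWeakSpace ℝ H))
    (hK.linear_image (toWeakSpace ℝ H).toLinearMap) (isCompact_toWeakSpace_image hK hKc hKb) hY
    (fun y hy => lowerSemicontinuousOn_toWeakSpace_symm hKc (hg_convex y hy) (hg_lsc y hy))
    (fun y hy => quasiconvexOn_toWeakSpace_symm (hg_convex y hy))
    (forall_mem_image.2 hg_usc) (forall_mem_image.2 hg_concave)
  simpa only [exists_mem_image, Function.comp_apply, LinearEquiv.symm_apply_apply] using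
    weak (by simpa only [exists_mem_image, Function.comp_apply,
      LinearEquiv.symm_apply_apply] using h)

end Minimax

section MonotoneSets

open Metric

variable {E : Type*} [NormedAddCommGroup E] [InnerProductSpace ℝ E]

/-- Two points `(x, v)` and `(x', v')` of `E × E` are monotonically related when
`0 ≤ ⟪v - v', x - x'⟫`. -/
def MonoRel (p q : E × E) : Prop := 0 ≤ ⟪p.2 - q.2, p.1 - q.1⟫

/-- A monotone subset of `E × E`, that is, the graph of a monotone operator. -/
def IsMonoSet (M : Set (E × E)) : Prop := ∀ p ∈ M, ∀ q ∈ M, MonoRel p q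

/-- `M` is monotone and contains every point of `W` that is monotonically related to it;
`M ⊆ W` is not required. -/
structure IsMaxMonoIn (M W : Set (E × E)) : Prop where
  isMonoSet : IsMonoSet M
  mem_of_forall_monoRel : ∀ p ∈ W, (∀ q ∈ M, MonoRel p q) → p ∈ M

variable {M W : Set (E × E)}

theorem MonoRel.refl (p : E × E) : MonoRel p p := by simp [MonoRel]

theorem MonoRel.symm {p q : E × E} (h : MonoRel p q) : MonoRel q p := by
  rwa [MonoRel, ← neg_sub p.2, ← neg_sub p.1, inner_neg_neg]

theorem isClosed_setOf_monoRel (x : E) (q : E × E) : IsClosed {v | MonoRel (x, v) q} :=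
  isClosed_le continuous_const (by fun_prop)

theorem IsMonoSet.mono {N : Set (E × E)} (hM : IsMonoSet M) (hN : N ⊆ M) : IsMonoSet N :=
  fun p hp q hq => hM p (hN hp) q (hN hq)

theorem IsMonoSet.insert (hM : IsMonoSet M) {p : E × E} (hp : ∀ q ∈ M, MonoRel p q) :
    IsMonoSet (insert p M) := by
  rintro a (rfl | ha) b (rfl | hb)
  exacts [.refl _, hp b hb, (hp a ha).symm, hM a ha b hb]

theorem IsMaxMonoIn.anti {W' : Set (E × E)} (h : IsMaxMonoIn M W) (hW : W' ⊆ W) :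
    IsMaxMonoIn M W' :=
  ⟨h.isMonoSet, fun p hp => h.mem_of_forall_monoRel p (hW hp)⟩

theorem IsMaxMonoIn.preimage_add_right (h : IsMaxMonoIn M W) (c : E × E) :
    IsMaxMonoIn ((· + c) ⁻¹' M) ((· + c) ⁻¹' W) where
  isMonoSet p hp q hq := by simpa [MonoRel] using h.isMonoSet _ hp _ hq
  mem_of_forall_monoRel p hp hpM := h.mem_of_forall_monoRel _ hp fun q hq => by
    simpa [MonoRel, sub_sub_eq_add_sub] using hpM (q - c) (by simpa using hq)

/-- The graph of an operator lifted to `E × E × ℝ` by its duality product and convexified, which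
makes the bilinear term `⟪v, x⟫` an affine coordinate. -/
def liftedHull (M : Set (E × E)) : Set (E × E × ℝ) :=
  convexHull ℝ ((fun p => (p.1, p.2, ⟪p.2, p.1⟫)) '' M)

theorem mk_mem_liftedHull {p : E × E} (hp : p ∈ M) : (p.1, p.2, ⟪p.2, p.1⟫) ∈ liftedHull M :=
  subset_convexHull ℝ _ (mem_image_of_mem _ hp)

theorem forall_mem_liftedHull_inner_add_inner_le {a b : E} {c : ℝ}
    (h : ∀ p ∈ M, ⟪p.2, a⟫ + ⟪b, p.1⟫ ≤ ⟪p.2, p.1⟫ + c) :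
    ∀ d ∈ liftedHull M, ⟪d.2.1, a⟫ + ⟪b, d.1⟫ ≤ d.2.2 + c := by
  have halfSpace_convex : Convex ℝ {d : E × E × ℝ | ⟪d.2.1, a⟫ + ⟪b, d.1⟫ - d.2.2 ≤ c} := by
    refine convex_halfSpace_le ⟨fun d e => ?_, fun t d => ?_⟩ c
    · simp only [Prod.fst_add, Prod.snd_add, inner_add_left, inner_add_right]
      ring
    · simp only [Prod.smul_fst, Prod.smul_snd, real_inner_smul_left, real_inner_smul_right,
        smul_eq_mul]
      ring
  intro d hd
  have := convexHull_min (image_subset_iff.2 fun p hp => ?_) halfSpace_convex hd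
  · linarith [this.out]
  · have := h p hp
    simp only [mem_preimage, mem_ofPred_eq]
    linarith

theorem IsMonoSet.inner_add_inner_le_of_mem_liftedHull (hM : IsMonoSet M) {p : E × E}
    (hp : p ∈ M) {d : E × E × ℝ} (hd : d ∈ liftedHull M) :
    ⟪d.2.1, p.1⟫ + ⟪p.2, d.1⟫ ≤ d.2.2 + ⟪p.2, p.1⟫ := by
  refine forall_mem_liftedHull_inner_add_inner_le (fun q hq => ?_) d hd
  have := hM p hp q hq
  simp only [MonoRel, inner_sub_left, inner_sub_right] at this
  linarith

theorem IsMonoSet.inner_le_of_mem_liftedHull (hM : IsMonoSet M) {d : E × E × ℝ}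
    (hd : d ∈ liftedHull M) : ⟪d.2.1, d.1⟫ ≤ d.2.2 := by
  have := forall_mem_liftedHull_inner_add_inner_le (M := M) (a := d.1) (b := d.2.1) (c := d.2.2)
    (fun q hq => by linarith [hM.inner_add_inner_le_of_mem_liftedHull hq hd]) d hd
  linarith

theorem IsMonoSet.nonneg_of_mem_liftedHull (hM : IsMonoSet M) (h0 : (0, 0) ∈ M)
    {d : E × E × ℝ} (hd : d ∈ liftedHull M) : 0 ≤ d.2.2 := by
  simpa using hM.inner_add_inner_le_of_mem_liftedHull h0 hd

theorem exists_smul_mem_closedBall_forall_norm_sub_le {r : ℝ} (hr : 0 ≤ r) (a : E) :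
    ∃ θ ∈ Icc (0 : ℝ) 1, ‖θ • a‖ ≤ r ∧ ∀ z, ‖z‖ ≤ r → ‖θ • a - z‖ ≤ ‖a - z‖ := by
  rcases le_or_gt ‖a‖ r with har | har
  · exact ⟨1, by simp, by simpa using har, by simp⟩
  have ha : 0 < ‖a‖ := hr.trans_lt har
  have hθ_le : r / ‖a‖ ≤ 1 := (div_le_one ha).2 har.le
  have hθa : ‖(r / ‖a‖) • a‖ = r := by
    rw [norm_smul, Real.norm_of_nonneg (by positivity), div_mul_cancel₀ _ ha.ne']
  refine ⟨r / ‖a‖, ⟨by positivity, hθ_le⟩, hθa.le, fun z hz => ?_⟩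
  have haz : (1 - r / ‖a‖) * ⟪a, z⟫ ≤ (1 - r / ‖a‖) * (‖a‖ * r) := by
    have := (real_inner_le_norm a z).trans (mul_le_mul_of_nonneg_left hz ha.le)
    exact mul_le_mul_of_nonneg_left this (sub_nonneg.2 hθ_le)
  have hexpand : (1 - r / ‖a‖) * (‖a‖ * r) = (‖a‖ - r) * r := by field_simp
  refine le_of_sq_le_sq ?_ (norm_nonneg _)
  rw [norm_sub_sq_real, norm_sub_sq_real, hθa, real_inner_smul_left]
  nlinarith [sq_nonneg (‖a‖ - r)]

theorem exists_mem_closedBall_inner_eq_neg_mul_norm {s : ℝ} (hs : 0 ≤ s) (c : E) :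
    ∃ w, ‖w‖ ≤ s ∧ ⟪w, c⟫ = -(s * ‖c‖) := by
  rcases eq_or_ne c 0 with rfl | hc
  · exact ⟨0, by simpa using hs, by simp⟩
  have hc' : ‖c‖ ≠ 0 := norm_ne_zero_iff.2 hc
  refine ⟨(-(s / ‖c‖)) • c, ?_, ?_⟩
  · rw [norm_smul, norm_neg, Real.norm_of_nonneg (by positivity), div_mul_cancel₀ _ hc']
  · rw [real_inner_smul_left, real_inner_self_eq_norm_sq]
    field_simp

/-- The payoff of the minimax problem between the unknown `(y, w)` and the test data `(z, d)`,
where `d = (x, v, q)` runs over a lifted hull. It is nonpositive at `d = (x, v, ⟪v, x⟫)` exactly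
when `f y + ⟪w, x - z⟫ ≤ f z + ⟪v, x - y⟫`. The pair `(y, w)` lives in `WithLp 2 (E × E)` because
`E × E` carries no inner product. -/
def payoff (f : E → ℝ) (u : WithLp 2 (E × E)) (d : E × E × E × ℝ) : ℝ :=
  f u.fst + ⟪d.2.2.1, u.fst⟫ + ⟪u.snd, d.2.1 - d.1⟫ - f d.1 - d.2.2.2

theorem continuous_payoff_left {f : E → ℝ} (hf : Continuous f) (d : E × E × E × ℝ) :
    Continuous (payoff f · d) := by
  unfold payoff
  fun_prop

theorem continuous_payoff_right {f : E → ℝ} (hf : Continuous f) (u : WithLp 2 (E × E)) :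
    Continuous (payoff f u) := by
  unfold payoff
  fun_prop

theorem convexOn_payoff {f : E → ℝ} (hf : ConvexOn ℝ univ f) (d : E × E × E × ℝ) :
    ConvexOn ℝ univ (payoff f · d) := by
  refine ⟨convex_univ, fun u _ u' _ a b ha hb hab => ?_⟩
  have := hf.2 (mem_univ u.fst) (mem_univ u'.fst) ha hb hab
  obtain rfl : b = 1 - a := by linarith
  simp only [payoff, WithLp.add_fst, WithLp.smul_fst, WithLp.add_snd, WithLp.smul_snd,
    inner_add_left, inner_add_right, real_inner_smul_left, real_inner_smul_right,
    smul_eq_mul] at this ⊢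
  linarith

theorem concaveOn_payoff {f : E → ℝ} (hf : ConvexOn ℝ univ f) (u : WithLp 2 (E × E)) :
    ConcaveOn ℝ univ (payoff f u) := by
  refine ⟨convex_univ, fun d _ d' _ a b ha hb hab => ?_⟩
  have := hf.2 (mem_univ d.1) (mem_univ d'.1) ha hb hab
  obtain rfl : b = 1 - a := by linarith
  simp only [payoff, Prod.fst_add, Prod.snd_add, Prod.smul_fst, Prod.smul_snd, inner_sub_right,
    inner_add_left, inner_add_right, real_inner_smul_left, real_inner_smul_right,
    smul_eq_mul] at this ⊢
  linarith

theorem IsMonoSet.exists_payoff_nonpos (hM : IsMonoSet M) {f : E → ℝ} {s : ℝ≥0}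
    (hf : LipschitzWith s f) (h0 : (0, 0) ∈ M) {r : ℝ} (hr : 0 ≤ r) {z : E}
    (hz : z ∈ closedBall 0 r) {d : E × E × ℝ} (hd : d ∈ liftedHull M) :
    ∃ y ∈ closedBall (0 : E) r, ∃ w ∈ closedBall (0 : E) s,
      payoff f (WithLp.toLp 2 (y, w)) (z, d) ≤ 0 := by
  obtain ⟨θ, ⟨hθ0, hθ1⟩, hθr, hθz⟩ := exists_smul_mem_closedBall_forall_norm_sub_le hr d.1
  obtain ⟨w, hw, hwd⟩ := exists_mem_closedBall_inner_eq_neg_mul_norm s.coe_nonneg (d.1 - z)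
  refine ⟨θ • d.1, by simpa using hθr, w, by simpa using hw, ?_⟩
  have lipschitz_bound : f (θ • d.1) - f z ≤ s * ‖d.1 - z‖ := by
    calc f (θ • d.1) - f z ≤ s * ‖θ • d.1 - z‖ :=
          (le_abs_self _).trans (by simpa only [Real.norm_eq_abs] using hf.norm_sub_le _ z)
      _ ≤ s * ‖d.1 - z‖ := by gcongr; exact hθz z (by simpa using hz)
  have inner_bound : ⟪d.2.1, θ • d.1⟫ ≤ d.2.2 := by
    calc ⟪d.2.1, θ • d.1⟫ = θ * ⟪d.2.1, d.1⟫ := real_inner_smul_right _ _ _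
      _ ≤ θ * d.2.2 := by gcongr; exact hM.inner_le_of_mem_liftedHull hd
      _ ≤ d.2.2 := mul_le_of_le_one_left (hM.nonneg_of_mem_liftedHull h0 hd) hθ1
  simp only [payoff, WithLp.toLp_fst, WithLp.toLp_snd]
  linarith

/-- The tilted penalty `z ↦ ε‖z - x‖ - ⟪v, z⟫`, whose subdifferential `ε ∂‖· - x‖ - v` turns the
variational inequality into one localising its solution at `(x, v)` up to `ε`. -/
def tiltedPenalty (ε : ℝ) (x v z : E) : ℝ := ε * ‖z - x‖ - ⟪v, z⟫

theorem convexOn_tiltedPenalty {ε : ℝ} (hε : 0 ≤ ε) (x v : E) :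
    ConvexOn ℝ univ (tiltedPenalty ε x v) := by
  simpa only [tiltedPenalty, dist_eq_norm] using!
    ((convexOn_dist x convex_univ).smul hε).sub ((innerₗ E v).concaveOn convex_univ)

theorem lipschitzWith_tiltedPenalty (ε : ℝ≥0) (x v : E) :
    LipschitzWith (‖v‖₊ + ε) (tiltedPenalty ε x v) := by
  refine LipschitzWith.of_le_add_mul _ fun y z => ?_
  have hpenalty : ε * ‖y - x‖ ≤ ε * (‖y - z‖ + ‖z - x‖) := by
    gcongr
    exact norm_sub_le_norm_sub_add_norm_sub y z x
  have htilt : ⟪v, z - y⟫ ≤ ‖v‖ * ‖y - z‖ := norm_sub_rev z y ▸ real_inner_le_norm v (z - y)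
  rw [inner_sub_right] at htilt
  simp only [tiltedPenalty, NNReal.coe_add, coe_nnnorm, dist_eq_norm]
  linarith

theorem norm_le_of_forall_mem_ball_inner_le {a : E} {c δ : ℝ} (hc : 0 ≤ c) (hδ : 0 < δ)
    (h : ∀ z ∈ ball (0 : E) δ, ⟪a, z⟫ ≤ c * ‖z‖) : ‖a‖ ≤ c := by
  rw [← innerSL_apply_norm ℝ a]
  refine ContinuousLinearMap.opNorm_le_of_ball hδ hc fun z hz => ?_
  rw [innerSL_apply_apply, Real.norm_eq_abs, abs_le']
  exact ⟨h z hz, by simpa using h (-z) (by simpa using hz)⟩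

variable [CompleteSpace E]

theorem IsMonoSet.exists_forall_add_inner_le (hM : IsMonoSet M) (h0 : (0, 0) ∈ M)
    {f : E → ℝ} {s : ℝ≥0} (hf : ConvexOn ℝ univ f) (hf' : LipschitzWith s f) {r : ℝ} (hr : 0 ≤ r) :
    ∃ y ∈ closedBall (0 : E) r, ∃ w ∈ closedBall (0 : E) s,
      ∀ p ∈ M, ∀ z ∈ closedBall (0 : E) r, f y + ⟪w, p.1 - z⟫ ≤ f z + ⟪p.2, p.1 - y⟫ := by
  let K : Set (WithLp 2 (E × E)) :=
    WithLp.ofLp ⁻¹' (closedBall (0 : E) r ×ˢ closedBall (0 : E) s)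
  have K_convex : Convex ℝ K :=
    ((convex_closedBall 0 r).prod (convex_closedBall 0 _)).linear_preimage
      (WithLp.linearEquiv 2 ℝ (E × E)).toLinearMap
  have K_closed : IsClosed K :=
    (isClosed_closedBall.prod isClosed_closedBall).preimage (WithLp.prod_continuous_ofLp 2 E E)
  have K_bounded : Bornology.IsBounded K :=
    (WithLp.prod_antilipschitzWith_ofLp 2 E E).isBounded_preimage
      (isBounded_closedBall.prod isBounded_closedBall)
  have Y_convex : Convex ℝ (closedBall (0 : E) r ×ˢ liftedHull M) :=
    (convex_closedBall _ _).prod (convex_convexHull _ _)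
  have K_nonempty : K.Nonempty := ⟨0, by simp [K, hr]⟩
  obtain ⟨u, ⟨hy, hw⟩, hu⟩ := exists_forall_le_of_forall_exists_le (g := payoff f) (t := 0)
    K_nonempty K_convex K_closed K_bounded Y_convex
    (fun d _ => (continuous_payoff_left hf'.continuous d).continuousOn.lowerSemicontinuousOn)
    (fun d _ => ((convexOn_payoff hf d).subset (subset_univ _) K_convex).quasiconvexOn)
    (fun u _ => (continuous_payoff_right hf'.continuous u).continuousOn.upperSemicontinuousOn)
    (fun u _ => ((concaveOn_payoff hf u).subset (subset_univ _) Y_convex).quasiconcaveOn)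
    (fun d hd => by
      obtain ⟨y, hy, w, hw, hyw⟩ := hM.exists_payoff_nonpos hf' h0 hr hd.1 hd.2
      exact ⟨WithLp.toLp 2 (y, w), ⟨hy, hw⟩, hyw⟩)
  refine ⟨u.fst, hy, u.snd, hw, fun p hp z hz => ?_⟩
  have := hu (z, p.1, p.2, ⟪p.2, p.1⟫) ⟨hz, mk_mem_liftedHull hp⟩
  simp only [payoff] at this
  rw [inner_sub_right p.2]
  linarith

theorem IsMaxMonoIn.exists_variational_inequality {r : ℝ} {s : ℝ≥0}
    (hM : IsMaxMonoIn M (closedBall 0 r ×ˢ closedBall 0 s)) (h0 : (0, 0) ∈ M) {f : E → ℝ}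
    (hf : ConvexOn ℝ univ f) (hf' : LipschitzWith s f) (hr : 0 ≤ r) :
    ∃ p ∈ M ∩ closedBall 0 r ×ˢ closedBall 0 s,
      ∀ z ∈ closedBall (0 : E) r, f p.1 ≤ f z + ⟪p.2, z - p.1⟫ := by
  obtain ⟨y, hy, w, hw, hyw⟩ := hM.isMonoSet.exists_forall_add_inner_le h0 hf hf' hr
  have related : ∀ q ∈ M, MonoRel (y, w) q := fun q hq => MonoRel.symm <| by
    have := hyw q hq y hy
    rw [MonoRel, inner_sub_left]
    linarith
  have hmem : (y, w) ∈ M := hM.mem_of_forall_monoRel _ ⟨hy, hw⟩ related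
  refine ⟨(y, w), ⟨hmem, hy, hw⟩, fun z hz => ?_⟩
  have := hyw _ hmem z hz
  simp only [sub_self, inner_zero_right, inner_sub_right] at this ⊢
  linarith

theorem IsMaxMonoIn.exists_mem_norm_sub_le {r : ℝ} {x v : E} {ε : ℝ≥0} (hε : 0 < ε)
    (hM : IsMaxMonoIn M (closedBall 0 r ×ˢ closedBall 0 (‖v‖ + ε))) (h0 : (0, 0) ∈ M)
    (hx : x ∈ ball 0 r)
    (hxv : ∀ q ∈ M ∩ closedBall 0 r ×ˢ closedBall 0 (‖v‖ + ε), MonoRel (x, v) q) :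
    ∃ w, (x, w) ∈ M ∧ ‖v - w‖ ≤ ε := by
  obtain ⟨⟨y, w⟩, hyw, hvar⟩ := hM.exists_variational_inequality (s := ‖v‖₊ + ε) h0
    (convexOn_tiltedPenalty ε.coe_nonneg x v) (lipschitzWith_tiltedPenalty ε x v)
    (nonempty_ball.1 ⟨x, hx⟩).le
  have hvar' : ∀ z ∈ closedBall (0 : E) r, ε * ‖y - x‖ + ⟪v - w, z - y⟫ ≤ ε * ‖z - x‖ := by
    intro z hz
    have := hvar z hz
    simp only [tiltedPenalty, inner_sub_right, inner_sub_left] at this ⊢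
    linarith
  obtain rfl : y = x := by
    have hrel : 0 ≤ ⟪v - w, x - y⟫ := hxv _ hyw
    have hle := hvar' x (ball_subset_closedBall hx)
    rw [sub_self, norm_zero, mul_zero] at hle
    have hnorm : ‖y - x‖ ≤ 0 := nonpos_of_mul_nonpos_right (by linarith) (NNReal.coe_pos.2 hε)
    exact sub_eq_zero.1 (norm_le_zero_iff.1 hnorm)
  refine ⟨w, hyw.1, ?_⟩
  obtain ⟨δ, hδ, hball⟩ := isOpen_iff.1 isOpen_ball y hx
  refine norm_le_of_forall_mem_ball_inner_le ε.coe_nonneg hδ fun z hz => ?_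
  simpa using hvar' (y + z) (ball_subset_closedBall (hball (by simpa using hz)))

theorem IsMaxMonoIn.mem_of_forall_monoRel_inter_ball_zero {r s : ℝ}
    (hM : IsMaxMonoIn M (ball 0 r ×ˢ ball 0 s)) (h0 : (0, 0) ∈ M) {p : E × E}
    (hp : p ∈ ball 0 r ×ˢ ball 0 s) (hpM : ∀ q ∈ M ∩ ball 0 r ×ˢ ball 0 s, MonoRel p q) :
    p ∈ M := by
  obtain ⟨x, v⟩ := p
  obtain ⟨hx, hv⟩ := hp
  obtain ⟨r', hxr', hr'r⟩ := exists_between (mem_ball_zero_iff.1 hx)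
  have v_mem_closure : v ∈ closure {w | (x, w) ∈ M} := by
    refine Metric.mem_closure_iff.2 fun η hη => ?_
    obtain ⟨ε, hε, hεη⟩ := exists_between (lt_min hη (sub_pos.2 (mem_ball_zero_iff.1 hv)))
    lift ε to ℝ≥0 using hε.le
    obtain ⟨hεη, hεs⟩ := lt_min_iff.1 hεη
    have box_subset : closedBall (0 : E) r' ×ˢ closedBall (0 : E) (‖v‖ + ε) ⊆
        ball 0 r ×ˢ ball 0 s :=
      prod_mono (closedBall_subset_ball hr'r) (closedBall_subset_ball (by linarith))
    obtain ⟨w, hw, hvw⟩ := (hM.anti box_subset).exists_mem_norm_sub_le (NNReal.coe_pos.1 hε) h0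
      (mem_ball_zero_iff.2 hxr') fun q hq => hpM q ⟨hq.1, box_subset hq.2⟩
    exact ⟨w, hw, (dist_eq_norm v w).trans_lt (hvw.trans_lt hεη)⟩
  refine hM.mem_of_forall_monoRel _ ⟨hx, hv⟩ fun q hq => ?_
  have related_closed := isClosed_setOf_monoRel x q
  exact closure_minimal (fun w hw => hM.isMonoSet (x, w) hw q hq) related_closed v_mem_closure

theorem IsMaxMonoIn.inter_ball_prod_ball {x v : E} {r s : ℝ}
    (hM : IsMaxMonoIn M (ball x r ×ˢ ball v s)) (hxv : (x, v) ∈ M) :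
    IsMaxMonoIn (M ∩ ball x r ×ˢ ball v s) (ball x r ×ˢ ball v s) := by
  refine ⟨hM.isMonoSet.mono inter_subset_left, fun p hp hpM => ⟨?_, hp⟩⟩
  have box : (· + (x, v)) ⁻¹' (ball x r ×ˢ ball v s) = ball (0 : E) r ×ˢ ball (0 : E) s := by
    ext q
    simp
  have hM' := hM.preimage_add_right (x, v)
  rw [box] at hM'
  rw [← sub_add_cancel p (x, v)]
  refine hM'.mem_of_forall_monoRel_inter_ball_zero (by simpa using hxv) (p := p - (x, v))
    (by rw [← box]; simpa using hp) fun q hq => ?_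
  rw [← box] at hq
  simpa [MonoRel, sub_sub_eq_add_sub, sub_sub, add_comm] using hpM _ hq

end MonotoneSets

section Operators

variable {E : Type*} [NormedAddCommGroup E] [InnerProductSpace ℝ E]

/-- The vertical shear `(x, v) ↦ (x, v + σx)`; it maps the graph of `T - σI` onto that of `T`. -/
def shear (σ : ℝ) (p : E × E) : E × E := (p.1, p.2 + σ • p.1)

theorem continuous_shear (σ : ℝ) : Continuous (shear σ : E × E → E × E) := by
  unfold shear
  fun_prop

theorem surjective_shear (σ : ℝ) : Function.Surjective (shear σ : E × E → E × E) :=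
  fun p => ⟨(p.1, p.2 - σ • p.1), by simp [shear]⟩

theorem inner_shear_sub_shear (σ : ℝ) (p q : E × E) :
    ⟪(shear σ p).2 - (shear σ q).2, (shear σ p).1 - (shear σ q).1⟫ =
      ⟪p.2 - q.2, p.1 - q.1⟫ + σ * ‖p.1 - q.1‖ ^ 2 := by
  rw [shear, shear, add_sub_add_comm, ← smul_sub, inner_add_left, real_inner_smul_left,
    real_inner_self_eq_norm_sq]

theorem IsMaxMonoIn.preimage_shear {M W : Set (E × E)} (hM : IsMaxMonoIn M W) {σ : ℝ}
    (hσ : 0 ≤ σ) (hstr : ∀ p ∈ M, ∀ q ∈ M, σ * ‖p.1 - q.1‖ ^ 2 ≤ ⟪p.2 - q.2, p.1 - q.1⟫) :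
    IsMaxMonoIn (shear σ ⁻¹' M) (shear σ ⁻¹' W) where
  isMonoSet p hp q hq := by
    have := hstr _ hp _ hq
    rw [inner_shear_sub_shear] at this
    exact nonneg_of_le_add_left this
  mem_of_forall_monoRel p hp hpM := hM.mem_of_forall_monoRel _ hp <| by
    rw [(surjective_shear σ).forall]
    intro q hq
    rw [MonoRel, inner_shear_sub_shear]
    have : 0 ≤ ⟪p.2 - q.2, p.1 - q.1⟫ := hpM q hq
    positivity

theorem gph_shiftI_neg (σ : ℝ) (T : E → Set E) : gph (shiftI (-σ) T) = shear σ ⁻¹' gph T := by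
  ext p
  simp [gph, shiftI, shear]

theorem locMaxA_iff_isMaxMonoIn {T : E → Set E} {W : Set (E × E)} :
    LocMaxA T W ↔ IsMaxMonoIn (gph T ∩ W) W := by
  constructor
  · rintro ⟨hmono, hmax⟩
    refine ⟨hmono, fun p hp hpT => ?_⟩
    let S : E → Set E := fun x => {v | (x, v) ∈ insert p (gph T)}
    have gph_S : gph S ∩ W = insert p (gph T ∩ W) := insert_inter_of_mem hp
    have S_mono : IsMonoSet (gph S ∩ W) := gph_S ▸ IsMonoSet.insert hmono hpT
    rw [← hmax S S_mono (gph_S ▸ subset_insert _ _), gph_S]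
    exact mem_insert _ _
  · intro h
    refine ⟨h.isMonoSet, fun S hS hTS => hTS.antisymm' fun p hp => ?_⟩
    exact h.mem_of_forall_monoRel p hp.2 fun q hq => hS p hp q (hTS hq)

end Operators

/-- If `T` is locally strongly maximal monotone of type (A) around `(x̄, x̄*)` with
modulus σ, then `T − σI` is locally maximal monotone of type (A) around `(x̄, x̄* − σx̄)`. -/
theorem stmt_14 (σ : ℝ) (hσ : 0 < σ) (T : X → Set X) (xbar vbar : X)
    (hx : vbar ∈ T xbar) (hA : LocStrMaxAAt σ T xbar vbar) :
    LocMaxAAt (shiftI (-σ) T) xbar (vbar - σ • xbar) := by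
  obtain ⟨U, hU, V, hV, hstr, hmax⟩ := hA
  have hmono : MonoOn' T (U ×ˢ V) := fun p hp q hq =>
    (by positivity : 0 ≤ σ * ‖p.1 - q.1‖ ^ 2).trans (hstr p hp q hq)
  have sheared_max : IsMaxMonoIn (shear σ ⁻¹' (gph T ∩ U ×ˢ V)) (shear σ ⁻¹' (U ×ˢ V)) :=
    (locMaxA_iff_isMaxMonoIn.1 ⟨hmono, hmax⟩).preimage_shear hσ.le hstr
  have shear_base : shear σ (xbar, vbar - σ • xbar) = (xbar, vbar) := by simp [shear]
  have sheared_nhds : shear σ ⁻¹' (U ×ˢ V) ∈ 𝓝 (xbar, vbar - σ • xbar) :=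
    (continuous_shear σ).continuousAt <| shear_base ▸ prod_mem_nhds hU hV
  obtain ⟨δ, hδ, hball⟩ := Metric.mem_nhds_iff.1 sheared_nhds
  rw [← ball_prod_same] at hball
  refine ⟨_, Metric.ball_mem_nhds _ hδ, _, Metric.ball_mem_nhds _ hδ, ?_⟩
  rw [locMaxA_iff_isMaxMonoIn, gph_shiftI_neg]
  have base_mem : (xbar, vbar - σ • xbar) ∈ shear σ ⁻¹' (gph T ∩ U ×ˢ V) := by
    rw [mem_preimage, shear_base]
    exact ⟨hx, mem_of_mem_nhds hU, mem_of_mem_nhds hV⟩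
  have := (sheared_max.anti hball).inter_ball_prod_ball base_mem
  rwa [preimage_inter, inter_assoc, inter_eq_right.2 hball] at this
end

section
/- Let X be a Hilbert space and T : X ⇉ X have locally closed graph around (x̄, v̄) ∈ gph T. Then T is locally maximal monotone around (x̄, v̄) if and only if T is locally hypomonotone around (x̄, v̄) with some modulus r > 0 and there exists a neighborhood W of (x̄, v̄) such that ⟨z, w⟩ ≥ 0 whenever z ∈ D̂*T(u, v)(w) and (u, v) ∈ gph T ∩ W. -/
open Set Filter Topology RealInnerProductSpace

variable {X : Type*} [NormedAddCommGroup X] [InnerProductSpace ℝ X] [CompleteSpace X]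

/-!
Work in the Minty coordinates `x + λ v` and `x - λ v` of the graph points `(x, v)`: a set of pairs
is monotone iff `x - λ v` is a nonexpansive function of `x + λ v`, the reflected resolvent.

If `T` agrees locally with a maximal monotone `G`, then Minty's theorem (proved by minimizing the
Fitzpatrick function plus a quadratic, which is strongly convex) provides a graph point of `G` with
`x + v` moved by `t (z - w)`, for every small `t > 0`. Testing a coderivative pair `z ∈ D̂*T(w)` on
these points and letting `t → 0` gives `‖z - w‖ ≤ ‖z + w‖`, that is, `0 ≤ ⟪z, w⟫`.

Conversely, for `λ r < 1` hypomonotonicity makes `x + λ v` bi-Lipschitz on the graph near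
`(x̄, v̄)`, so there the graph is that of a Lipschitz reflected resolvent `R` on a closed set `D`.
Every proximal subgradient of `⟪h, R ·⟫` on `D` yields a coderivative pair, whose positivity bounds
the subgradient by `‖h‖`. With `h = 0`, the indicator of `D` has only trivial subgradients, so `D`
contains a ball around `x̄ + λ v̄`; and `R` is nonexpansive on a smaller ball, because a function
with proximal subgradients bounded by `H` is locally `H`-Lipschitz. Both conclusions rest on a
smooth variational principle: by Baire's theorem, arbitrarily small quadratic perturbations make a
lower semicontinuous function attain its minimum. A maximal monotone extension of the local graph
then adds no points near `(x̄, v̄)`, since `x + λ v` is injective on its graph.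
-/

theorem exists_forall_pos_mem_of_monotone {M : Type*} [PseudoMetricSpace M] [CompleteSpace M]
    {A : ℝ → Set M} (hmono : Monotone A) (hne : ∀ δ > 0, (A δ).Nonempty)
    (hclosed : ∀ δ > 0, IsClosed (A δ))
    (hsmall : ∀ ε > 0, ∃ δ > 0, ∃ x, A δ ⊆ Metric.closedBall x ε) :
    ∃ y, ∀ δ > 0, y ∈ A δ := by
  have : Nonempty M := ⟨(hne 1 one_pos).some⟩
  choose! u hu using hne
  have hu_mem : ∀ δ > 0, ∀ᶠ t in 𝓝[>] (0 : ℝ), u t ∈ A δ := fun δ hδ => by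
    filter_upwards [Ioo_mem_nhdsGT hδ] with t ht using hmono ht.2.le (hu t ht.1)
  have hcauchy : Cauchy (map u (𝓝[>] 0)) := by
    refine Metric.cauchy_iff.2 ⟨inferInstance, fun ε hε => ?_⟩
    obtain ⟨δ, hδ, x, hx⟩ := hsmall (ε / 3) (by positivity)
    refine ⟨A δ, hu_mem δ hδ, fun y hy z hz => ?_⟩
    have hyx := Metric.mem_closedBall.1 (hx hy)
    have hzx := Metric.mem_closedBall.1 (hx hz)
    linarith [dist_triangle_right y z x]
  obtain ⟨y, hy⟩ := CompleteSpace.complete hcauchy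
  exact ⟨y, fun δ hδ => (hclosed δ hδ).mem_of_tendsto hy (hu_mem δ hδ)⟩

section ApproxArgmin

/-- The `δ`-approximate minimizers of `f` on `S`. -/
def approxArgmin {α : Type*} (S : Set α) (f : α → ℝ) (δ : ℝ) : Set α :=
  {y ∈ S | ∀ y' ∈ S, f y ≤ f y' + δ}

variable {α : Type*} {S : Set α} {f g : α → ℝ} {δ : ℝ}

theorem approxArgmin_mono : Monotone (approxArgmin S f) :=
  fun _ _ hδ _ hy => ⟨hy.1, fun y' hy' => (hy.2 y' hy').trans (by gcongr)⟩

theorem approxArgmin_nonempty (hS : S.Nonempty) (hf : BddBelow (f '' S)) (hδ : 0 < δ) :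
    (approxArgmin S f δ).Nonempty := by
  obtain ⟨_, ⟨y, hy, rfl⟩, hlt⟩ :=
    exists_lt_of_csInf_lt (hS.image f) (lt_add_of_pos_right (sInf (f '' S)) hδ)
  exact ⟨y, hy, fun y' hy' => by linarith [csInf_le hf (mem_image_of_mem f hy')]⟩

theorem isClosed_approxArgmin [TopologicalSpace α] (hS : IsClosed S)
    (hf : LowerSemicontinuousOn f S) : IsClosed (approxArgmin S f δ) := by
  have hsublevel : ∀ c, IsClosed (S ∩ f ⁻¹' Iic c) := fun c => by
    obtain ⟨v, hv, heq⟩ := lowerSemicontinuousOn_iff_preimage_Iic.1 hf c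
    exact heq ▸ hS.inter hv
  have heq : approxArgmin S f δ = S ∩ ⋂ y' ∈ S, S ∩ f ⁻¹' Iic (f y' + δ) := by
    ext y
    simp +contextual [approxArgmin]
  exact heq ▸ hS.inter (isClosed_biInter fun y' _ => hsublevel _)

theorem approxArgmin_subset_of_abs_sub_le (h : ∀ y ∈ S, |f y - g y| ≤ δ / 3) :
    approxArgmin S g (δ / 3) ⊆ approxArgmin S f δ := fun y hy => by
  refine ⟨hy.1, fun y' hy' => ?_⟩
  linarith [abs_le.1 (h y hy.1), abs_le.1 (h y' hy'), hy.2 y' hy']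

theorem approxArgmin_add_mul_dist_sq_subset_closedBall [PseudoMetricSpace α] {x : α} {ν ε : ℝ}
    (hν : 0 < ν) (hε : 0 ≤ ε) (hx : x ∈ approxArgmin S f (ν * ε ^ 2 / 2)) :
    approxArgmin S (fun y => f y + ν * dist y x ^ 2) (ν * ε ^ 2 / 2) ⊆
      Metric.closedBall x ε := fun y hy => by
  have hyx := hy.2 x hx.1
  have hxy := hx.2 y hy.1
  simp only [dist_self] at hyx
  exact abs_le_of_sq_le_sq' (le_of_mul_le_mul_left (by linarith) hν) hε |>.2

theorem exists_isMinOn_of_approxArgmin_subset_closedBall [PseudoMetricSpace α] [CompleteSpace α]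
    (hS : IsClosed S) (hne : S.Nonempty) (hlsc : LowerSemicontinuousOn f S)
    (hf : BddBelow (f '' S))
    (hsmall : ∀ ε > 0, ∃ δ > 0, ∃ x, approxArgmin S f δ ⊆ Metric.closedBall x ε) :
    ∃ y ∈ S, IsMinOn f S y := by
  obtain ⟨y, hy⟩ := exists_forall_pos_mem_of_monotone approxArgmin_mono
    (fun _ hδ => approxArgmin_nonempty hne hf hδ) (fun _ _ => isClosed_approxArgmin hS hlsc) hsmall
  exact ⟨y, (hy 1 one_pos).1, fun y' hy' =>
    le_of_forall_pos_le_add fun δ hδ => (hy δ hδ).2 y' hy'⟩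

end ApproxArgmin

section VariationalPrinciple

variable {E : Type*} [NormedAddCommGroup E] [InnerProductSpace ℝ E]

/-- The quadratic function `y ↦ μ‖y‖² + ⟪η, y⟫` with parameter `θ = (μ, η)`. Such functions serve
as the perturbations of the smooth variational principle. -/
def quadPerturb (θ : ℝ × E) (y : E) : ℝ := θ.1 * ‖y‖ ^ 2 + ⟪θ.2, y⟫

theorem continuous_quadPerturb (θ : ℝ × E) : Continuous (quadPerturb θ) := by
  unfold quadPerturb
  fun_prop

theorem quadPerturb_sub (θ θ' : ℝ × E) (y : E) :
    quadPerturb (θ - θ') y = quadPerturb θ y - quadPerturb θ' y := by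
  simp only [quadPerturb, Prod.fst_sub, Prod.snd_sub, inner_sub_left]
  ring

theorem abs_quadPerturb_le {B : ℝ} {y : E} (hy : ‖y‖ ≤ B) (θ : ℝ × E) :
    |quadPerturb θ y| ≤ (B ^ 2 + B) * ‖θ‖ := by
  have : 0 ≤ B := (norm_nonneg y).trans hy
  calc |quadPerturb θ y| ≤ |θ.1| * ‖y‖ ^ 2 + ‖θ.2‖ * ‖y‖ := by
        refine (abs_add_le _ _).trans (add_le_add ?_ (abs_real_inner_le_norm _ _))
        rw [abs_mul, abs_of_nonneg (sq_nonneg ‖y‖)]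
    _ ≤ ‖θ‖ * B ^ 2 + ‖θ‖ * B := by
        gcongr
        exacts [norm_fst_le θ, norm_snd_le θ]
    _ = (B ^ 2 + B) * ‖θ‖ := by ring

theorem quadPerturb_add_eq_add_mul_dist_sq (θ : ℝ × E) (ν : ℝ) (x y : E) :
    quadPerturb (θ + ν • (1, -(2 : ℝ) • x)) y =
      quadPerturb θ y + ν * dist y x ^ 2 - ν * ‖x‖ ^ 2 := by
  simp only [quadPerturb, Prod.fst_add, Prod.snd_add, Prod.smul_fst, Prod.smul_snd,
    inner_add_left, real_inner_smul_left, smul_eq_mul, dist_eq_norm, norm_sub_sq_real,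
    real_inner_comm x y]
  ring

/-- The parameters `θ` for which some set of approximate minimizers of `f + quadPerturb θ` on `S`
lies in a ball of radius `ε`. -/
def wellPosedParams (S : Set E) (f : E → ℝ) (ε : ℝ) : Set (ℝ × E) :=
  {θ | ∃ δ > 0, ∃ x, approxArgmin S (fun y => f y + quadPerturb θ y) δ ⊆ Metric.closedBall x ε}

variable {S : Set E} {f : E → ℝ} {ε : ℝ}

theorem isOpen_wellPosedParams (hS : Bornology.IsBounded S) : IsOpen (wellPosedParams S f ε) := by
  obtain ⟨B, hB, hSB⟩ := hS.exists_pos_norm_le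
  refine Metric.isOpen_iff.2 fun θ ⟨δ, hδ, x, hx⟩ => ?_
  refine ⟨δ / 3 / (B ^ 2 + B), by positivity, fun θ' hθ' => ⟨δ / 3, by positivity, x, ?_⟩⟩
  refine (approxArgmin_subset_of_abs_sub_le fun y hy => ?_).trans hx
  rw [add_sub_add_left_eq_sub, ← quadPerturb_sub]
  refine (abs_quadPerturb_le (hSB y hy) _).trans ?_
  rw [← dist_eq_norm, dist_comm, ← le_div_iff₀' (by positivity)]
  exact (Metric.mem_ball.1 hθ').le

theorem bddBelow_image_add_quadPerturb (hS : Bornology.IsBounded S) (hf : BddBelow (f '' S))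
    (θ : ℝ × E) : BddBelow ((fun y => f y + quadPerturb θ y) '' S) := by
  obtain ⟨B, -, hSB⟩ := hS.exists_pos_norm_le
  obtain ⟨m, hm⟩ := hf
  refine ⟨m - (B ^ 2 + B) * ‖θ‖, forall_mem_image.2 fun y hy => ?_⟩
  linarith [hm (mem_image_of_mem f hy), abs_le.1 (abs_quadPerturb_le (hSB y hy) θ)]

theorem dense_wellPosedParams (hS : Bornology.IsBounded S) (hne : S.Nonempty)
    (hf : BddBelow (f '' S)) (hε : 0 < ε) : Dense (wellPosedParams S f ε) := by
  obtain ⟨B, hB, hSB⟩ := hS.exists_pos_norm_le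
  refine Metric.dense_iff.2 fun θ r hr => ?_
  set ν : ℝ := r / (2 + 2 * B) with hν
  have hν0 : 0 < ν := by positivity
  obtain ⟨x, hx⟩ := approxArgmin_nonempty hne (bddBelow_image_add_quadPerturb hS hf θ)
    (show 0 < ν * ε ^ 2 / 2 by positivity)
  refine ⟨θ + ν • (1, -(2 : ℝ) • x), ?_, ν * ε ^ 2 / 2, by positivity, x, ?_⟩
  · have hnorm : ‖((1 : ℝ), -(2 : ℝ) • x)‖ < 2 + 2 * B := by
      refine max_lt (by norm_num; linarith) ?_
      rw [norm_smul, norm_neg, Real.norm_ofNat]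
      linarith [hSB x hx.1]
    rw [mem_ball_iff_norm, add_sub_cancel_left, norm_smul, Real.norm_of_nonneg hν0.le, hν,
      div_mul_eq_mul_div, div_lt_iff₀ (by positivity)]
    gcongr
  · refine Subset.trans (fun y hy => ?_)
      (approxArgmin_add_mul_dist_sq_subset_closedBall hν0 hε.le hx)
    refine ⟨hy.1, fun y' hy' => ?_⟩
    have hyy' := hy.2 y' hy'
    simp only [quadPerturb_add_eq_add_mul_dist_sq] at hyy'
    linarith

theorem exists_isMinOn_add_quadPerturb [CompleteSpace E] (hclosed : IsClosed S)
    (hS : Bornology.IsBounded S) (hne : S.Nonempty) (hlsc : LowerSemicontinuousOn f S)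
    (hf : BddBelow (f '' S)) (hε : 0 < ε) :
    ∃ θ : ℝ × E, ‖θ‖ < ε ∧ ∃ y ∈ S, IsMinOn (fun y => f y + quadPerturb θ y) S y := by
  have hdense : Dense (⋂ n : ℕ, wellPosedParams S f (1 / (n + 1))) :=
    dense_iInter_of_isOpen_nat (fun _ => isOpen_wellPosedParams hS)
      fun n => dense_wellPosedParams hS hne hf (by positivity)
  obtain ⟨θ, hθ, hwell⟩ := Metric.dense_iff.1 hdense 0 ε hε
  refine ⟨θ, mem_ball_zero_iff.1 hθ, exists_isMinOn_of_approxArgmin_subset_closedBall hclosed hne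
    (hlsc.add (continuous_quadPerturb θ).continuousOn.lowerSemicontinuousOn)
    (bddBelow_image_add_quadPerturb hS hf θ) fun η hη => ?_⟩
  obtain ⟨n, hn⟩ := exists_nat_one_div_lt hη
  obtain ⟨δ, hδ, x, hx⟩ := mem_iInter.1 hwell n
  exact ⟨δ, hδ, x, hx.trans (Metric.closedBall_subset_closedBall hn.le)⟩

end VariationalPrinciple

section ProximalSubgradient

open scoped NNReal

variable {E : Type*} [NormedAddCommGroup E] [InnerProductSpace ℝ E]

/-- `ζ` is a proximal subgradient at `y` of the restriction of `f` to `D`: near `y` in `D`, the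
function `f` stays above a concave quadratic through `(y, f y)` with slope `ζ`. -/
def IsProxSubgrad (D : Set E) (f : E → ℝ) (y ζ : E) : Prop :=
  ∃ C : ℝ, ∀ᶠ y' in 𝓝[D] y, f y + ⟪ζ, y' - y⟫ - C * ‖y' - y‖ ^ 2 ≤ f y'

variable {D S : Set E} {f g : E → ℝ} {a b c y ζ ξ : E} {r s ε κ N : ℝ}

theorem IsProxSubgrad.of_mem_nhdsWithin (h : IsProxSubgrad S f y ζ) (hS : S ∈ 𝓝[D] y) :
    IsProxSubgrad D f y ζ :=
  h.imp fun _ hC => nhdsWithin_le_iff.2 hS hC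

theorem IsProxSubgrad.add (hf : IsProxSubgrad D f y ζ) (hg : IsProxSubgrad D g y ξ) :
    IsProxSubgrad D (fun z => f z + g z) y (ζ + ξ) := by
  obtain ⟨C, hC⟩ := hf
  obtain ⟨C', hC'⟩ := hg
  refine ⟨C + C', ?_⟩
  filter_upwards [hC, hC'] with y' hf' hg'
  rw [inner_add_left]
  linarith

theorem isProxSubgrad_zero_of_isMinOn (h : IsMinOn f D y) : IsProxSubgrad D f y 0 := by
  refine ⟨0, eventually_nhdsWithin_of_forall fun y' hy' => ?_⟩
  simpa using isMinOn_iff.1 h y' hy'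

theorem isProxSubgrad_neg_quadPerturb (D : Set E) (θ : ℝ × E) (y : E) :
    IsProxSubgrad D (fun z => -quadPerturb θ z) y (-((2 * θ.1) • y + θ.2)) := by
  refine ⟨θ.1, Eventually.of_forall fun y' => le_of_eq ?_⟩
  simp only [quadPerturb, inner_neg_left, inner_add_left, inner_sub_right, real_inner_smul_left,
    norm_sub_sq_real, real_inner_self_eq_norm_sq, real_inner_comm y y']
  ring

theorem norm_le_norm_add_inner_div_add {u : E} (hu : u ≠ 0) (h : E) :
    ‖u + h‖ ≤ ‖u‖ + ⟪u, h⟫ / ‖u‖ + ‖h‖ ^ 2 / (2 * ‖u‖) := by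
  have : 0 < ‖u‖ := norm_pos_iff.2 hu
  have hsq : 0 ≤ (‖u + h‖ - ‖u‖) ^ 2 / (2 * ‖u‖) := by positivity
  have heq : (‖u + h‖ - ‖u‖) ^ 2 / (2 * ‖u‖) =
      ‖u‖ + ⟪u, h⟫ / ‖u‖ + ‖h‖ ^ 2 / (2 * ‖u‖) - ‖u + h‖ := by
    rw [sub_sq, norm_add_sq_real]
    field_simp
    ring
  linarith

theorem isProxSubgrad_neg_norm_penalty (D : Set E) (hκ : 0 ≤ κ) (N : ℝ) (hya : y ≠ a) :
    IsProxSubgrad D (fun z => -(κ * ‖z - a‖ + N * ‖z - a‖ ^ 2)) y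
      (-((κ / ‖y - a‖ + 2 * N) • (y - a))) := by
  refine ⟨κ / (2 * ‖y - a‖) + N, Eventually.of_forall fun y' => ?_⟩
  have hnorm := mul_le_mul_of_nonneg_left
    (norm_le_norm_add_inner_div_add (sub_ne_zero.2 hya) (y' - y)) hκ
  have hsq := norm_add_sq_real (y - a) (y' - y)
  rw [sub_add_sub_cancel'] at hnorm hsq
  rw [inner_neg_left, real_inner_smul_left]
  linear_combination hnorm + N * hsq

theorem le_norm_penalty_slope (hκ : 0 ≤ κ) (hN : 0 ≤ N) (hya : y ≠ a) :
    κ ≤ ‖(κ / ‖y - a‖ + 2 * N) • (y - a)‖ := by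
  have hpos : 0 < ‖y - a‖ := norm_sub_pos_iff.2 hya
  rw [norm_smul, Real.norm_of_nonneg (by positivity), add_mul, div_mul_cancel₀ _ hpos.ne']
  exact le_add_of_nonneg_right (by positivity)

theorem exists_isProxSubgrad_norm_le [CompleteSpace E] (hclosed : IsClosed S)
    (hS : Bornology.IsBounded S) (hlsc : LowerSemicontinuousOn f S) (hf : BddBelow (f '' S))
    (hb : b ∈ S) (hε : 0 < ε) :
    ∃ y ∈ S, f y ≤ f b + ε ∧ ∃ ζ, ‖ζ‖ ≤ ε ∧ IsProxSubgrad S f y ζ := by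
  obtain ⟨B, hB, hSB⟩ := hS.exists_pos_norm_le
  obtain ⟨θ, hθ, y, hy, hmin⟩ := exists_isMinOn_add_quadPerturb hclosed hS ⟨b, hb⟩ hlsc hf
    (show 0 < ε / (2 * (B ^ 2 + B) + (2 * B + 1)) by positivity)
  rw [lt_div_iff₀' (by positivity)] at hθ
  refine ⟨y, hy, ?_, -((2 * θ.1) • y + θ.2), ?_, ?_⟩
  · have hyb : f y + quadPerturb θ y ≤ f b + quadPerturb θ b := isMinOn_iff.1 hmin b hb
    have hBθ : 0 ≤ (2 * B + 1) * ‖θ‖ := by positivity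
    linarith [abs_le.1 (abs_quadPerturb_le (hSB y hy) θ),
      abs_le.1 (abs_quadPerturb_le (hSB b hb) θ)]
  · calc ‖-((2 * θ.1) • y + θ.2)‖ ≤ 2 * ‖θ.1‖ * ‖y‖ + ‖θ.2‖ := by
          simpa only [norm_neg, norm_smul, norm_mul, Real.norm_ofNat] using
            norm_add_le ((2 * θ.1) • y) θ.2
      _ ≤ 2 * ‖θ‖ * B + ‖θ‖ := by
          gcongr
          exacts [norm_fst_le θ, hSB y hy, norm_snd_le θ]
      _ = (2 * B + 1) * ‖θ‖ := by ring
      _ ≤ ε := by linarith [show 0 ≤ (B ^ 2 + B) * ‖θ‖ by positivity]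
  · simpa using (isProxSubgrad_zero_of_isMinOn hmin).add (isProxSubgrad_neg_quadPerturb S θ y)

theorem exists_isProxSubgrad_le_norm [CompleteSpace E] (hclosed : IsClosed S)
    (hS : Bornology.IsBounded S) (hlsc : LowerSemicontinuousOn f S) (hf : BddBelow (f '' S))
    (hκ : 0 ≤ κ) (hN : 0 ≤ N) (hε : 0 < ε) (a : E) (hb : b ∈ S) :
    ∃ y ∈ S, f y + (κ * ‖y - a‖ + N * ‖y - a‖ ^ 2) ≤
        f b + (κ * ‖b - a‖ + N * ‖b - a‖ ^ 2) + ε ∧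
      (y ≠ a → ∃ ζ, κ - ε ≤ ‖ζ‖ ∧ IsProxSubgrad S f y ζ) := by
  have hcont : Continuous fun y : E => κ * ‖y - a‖ + N * ‖y - a‖ ^ 2 := by fun_prop
  have hbdd : BddBelow ((fun y => f y + (κ * ‖y - a‖ + N * ‖y - a‖ ^ 2)) '' S) := by
    obtain ⟨m, hm⟩ := hf
    refine ⟨m, forall_mem_image.2 fun y hy => ?_⟩
    exact (hm (mem_image_of_mem f hy)).trans (le_add_of_nonneg_right (by positivity))
  obtain ⟨y, hy, hle, ζ, hζ, hprox⟩ := exists_isProxSubgrad_norm_le hclosed hS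
    (hlsc.add hcont.continuousOn.lowerSemicontinuousOn) hbdd hb hε
  refine ⟨y, hy, hle, fun hya => ⟨ζ + -((κ / ‖y - a‖ + 2 * N) • (y - a)), ?_, ?_⟩⟩
  · rw [← sub_eq_add_neg, norm_sub_rev]
    linarith [le_norm_penalty_slope hκ hN hya,
      norm_sub_norm_le ((κ / ‖y - a‖ + 2 * N) • (y - a)) ζ]
  · simpa only [add_neg_cancel_right] using
      hprox.add (isProxSubgrad_neg_norm_penalty S hκ N hya)

theorem ball_subset_of_forall_isProxSubgrad_eq_zero [CompleteSpace E] (hD : IsClosed D)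
    (hc : c ∈ D) (hzero : ∀ y ∈ D ∩ Metric.ball c (2 * r), ∀ ζ,
      IsProxSubgrad D (fun _ => 0) y ζ → ζ = 0) :
    Metric.ball c r ⊆ D := fun a ha => by
  have hca : ‖c - a‖ < r := mem_ball_iff_norm'.1 ha
  set ε : ℝ := min ((r - ‖c - a‖) / 2) (1 / 2)
  have hε0 : 0 < ε := lt_min (by linarith) (by norm_num)
  have hεr : ε ≤ (r - ‖c - a‖) / 2 := min_le_left _ _
  have hε1 : ε ≤ 1 / 2 := min_le_right _ _
  obtain ⟨y, ⟨hyD, -⟩, hle, hprox⟩ := exists_isProxSubgrad_le_norm (f := fun _ => 0) (N := 0)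
    (hD.inter Metric.isClosed_closedBall)
    (Metric.isBounded_closedBall.subset inter_subset_right)
    lowerSemicontinuousOn_const ⟨0, forall_mem_image.2 fun _ _ => le_rfl⟩ zero_le_one le_rfl hε0 a
    (show c ∈ D ∩ Metric.closedBall a r from ⟨hc, mem_closedBall_iff_norm.2 hca.le⟩)
  have hya : ‖y - a‖ < r := by linarith
  by_contra haD
  obtain ⟨ζ, hζ, hζprox⟩ := hprox (ne_of_mem_of_not_mem hyD haD)
  have hyc : y ∈ Metric.ball c (2 * r) := by
    rw [mem_ball_iff_norm]
    linarith [norm_sub_le_norm_sub_add_norm_sub y a c, norm_sub_rev a c]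
  have hnhds : D ∩ Metric.closedBall a r ∈ 𝓝[D] y := inter_mem self_mem_nhdsWithin
    (mem_nhdsWithin_of_mem_nhds
      (Metric.closedBall_mem_nhds_of_mem (mem_ball_iff_norm.2 hya)))
  rw [hzero y ⟨hyD, hyc⟩ ζ (hζprox.of_mem_nhdsWithin hnhds), norm_zero] at hζ
  linarith

theorem le_add_mul_norm_sq_of_isProxSubgrad_norm_le [CompleteSpace E] {H L : ℝ≥0} (hs : 0 < s)
    (hf : LipschitzOnWith L f (Metric.closedBall a s))
    (hprox : ∀ y ∈ Metric.ball a s, ∀ ζ, IsProxSubgrad univ f y ζ → ‖ζ‖ ≤ H)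
    (hb : b ∈ Metric.closedBall a s) :
    f a ≤ f b + H * ‖b - a‖ + L / s * ‖b - a‖ ^ 2 := by
  refine le_of_forall_pos_le_add fun δ hδ => ?_
  set ε : ℝ := δ / (2 * ‖b - a‖ + 1)
  have hε0 : 0 < ε := by positivity
  have hεδ : ε * (2 * ‖b - a‖ + 1) = δ := div_mul_cancel₀ _ (by positivity)
  have ha : a ∈ Metric.closedBall a s := Metric.mem_closedBall_self hs.le
  have hLip : ∀ y ∈ Metric.closedBall a s, f a - L * ‖y - a‖ ≤ f y := fun y hy => by
    have := abs_le.1 (hf.norm_sub_le ha hy)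
    rw [norm_sub_rev a y] at this
    linarith
  have hbdd : BddBelow (f '' Metric.closedBall a s) := by
    refine ⟨f a - L * s, forall_mem_image.2 fun y hy => (hLip y hy).trans' ?_⟩
    gcongr
    exact mem_closedBall_iff_norm.1 hy
  obtain ⟨y, hy, hle, hslope⟩ := exists_isProxSubgrad_le_norm Metric.isClosed_closedBall
    Metric.isBounded_closedBall hf.continuousOn.lowerSemicontinuousOn hbdd
    (show 0 ≤ (H + 2 * ε : ℝ) by positivity) (show 0 ≤ L / s by positivity) hε0 a hb
  suffices hya : f a ≤ f y + ((H + 2 * ε) * ‖y - a‖ + L / s * ‖y - a‖ ^ 2) by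
    linear_combination hya + hle + hεδ
  -- Inside the ball the slope bound forces `y = a`; on the sphere the quadratic term of the
  -- penalty alone compensates the largest possible decrease `L * s` of `f`.
  by_cases hball : y ∈ Metric.ball a s
  · suffices y = a by simp [this]
    by_contra hne
    obtain ⟨ζ, hζ, hζprox⟩ := hslope hne
    have hnhds : Metric.closedBall a s ∈ 𝓝[univ] y :=
      mem_nhdsWithin_of_mem_nhds (Metric.closedBall_mem_nhds_of_mem hball)
    linarith [hprox y hball ζ (hζprox.of_mem_nhdsWithin hnhds)]
  · have hys : ‖y - a‖ = s := le_antisymm (mem_closedBall_iff_norm.1 hy)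
      (not_lt.1 fun h => hball (mem_ball_iff_norm.2 h))
    have hbound := hLip y hy
    have hL : L / s * s ^ 2 = L * s := by field_simp
    rw [hys] at hbound ⊢
    linarith [show 0 ≤ (H + 2 * ε) * s by positivity]

theorem le_add_mul_norm_of_le_add_mul_norm_sq {K : ℝ} (hS : Convex ℝ S)
    (h : ∀ a ∈ S, ∀ b ∈ S, f a ≤ f b + K * ‖b - a‖ + N * ‖b - a‖ ^ 2)
    (ha : a ∈ S) (hb : b ∈ S) : f a ≤ f b + K * ‖b - a‖ := by
  -- Each bisection of the segment halves the total quadratic error.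
  have hiter : ∀ n : ℕ, ∀ a ∈ S, ∀ b ∈ S,
      f a ≤ f b + K * ‖b - a‖ + N * (1 / 2) ^ n * ‖b - a‖ ^ 2 := by
    intro n
    induction n with
    | zero => simpa using h
    | succ n ih =>
      intro a ha b hb
      have hm : midpoint ℝ a b ∈ S := hS.midpoint_mem ha hb
      have ham : ‖midpoint ℝ a b - a‖ = ‖b - a‖ / 2 := by
        rw [← dist_eq_norm, dist_midpoint_left, Real.norm_ofNat, dist_eq_norm', inv_mul_eq_div]
      have hmb : ‖b - midpoint ℝ a b‖ = ‖b - a‖ / 2 := by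
        rw [← dist_eq_norm, dist_right_midpoint, Real.norm_ofNat, dist_eq_norm', inv_mul_eq_div]
      have h₁ := ih a ha _ hm
      have h₂ := ih _ hm b hb
      rw [ham] at h₁
      rw [hmb] at h₂
      linear_combination h₁ + h₂
  have hlim : Tendsto (fun n : ℕ => f b + K * ‖b - a‖ + N * (1 / 2) ^ n * ‖b - a‖ ^ 2) atTop
      (𝓝 (f b + K * ‖b - a‖ + N * 0 * ‖b - a‖ ^ 2)) :=
    (((tendsto_pow_atTop_nhds_zero_of_lt_one (by norm_num) (by norm_num)).const_mul N).mul_const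
      _).const_add _
  simpa using ge_of_tendsto' hlim fun n => hiter n a ha b hb

theorem lipschitzOnWith_of_isProxSubgrad_norm_le [CompleteSpace E] {H L : ℝ≥0}
    (hf : LipschitzOnWith L f (Metric.ball c (3 * r)))
    (hprox : ∀ y ∈ Metric.ball c (3 * r), ∀ ζ, IsProxSubgrad univ f y ζ → ‖ζ‖ ≤ H) :
    LipschitzOnWith H f (Metric.ball c r) := by
  refine LipschitzOnWith.of_le_add_mul H fun a ha b hb => ?_
  rw [dist_comm, dist_eq_norm]
  refine le_add_mul_norm_of_le_add_mul_norm_sq (N := L / (2 * r)) (convex_ball c r)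
    (fun a ha b hb => ?_) ha hb
  have hsub : Metric.closedBall a (2 * r) ⊆ Metric.ball c (3 * r) :=
    Metric.closedBall_subset_ball' (by linarith [Metric.mem_ball.1 ha])
  refine le_add_mul_norm_sq_of_isProxSubgrad_norm_le
    (by linarith [dist_nonneg.trans_lt (Metric.mem_ball.1 ha)]) (hf.mono hsub)
    (fun y hy => hprox y (hsub (Metric.ball_subset_closedBall hy))) ?_
  rw [Metric.mem_closedBall]
  linarith [dist_triangle_right b a c, Metric.mem_ball.1 ha, Metric.mem_ball.1 hb]

theorem lipschitzOnWith_of_isProxSubgrad_inner_norm_le [CompleteSpace E] {F : Type*}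
    [NormedAddCommGroup F] [InnerProductSpace ℝ F] {R : E → F} {H L : ℝ≥0}
    (hR : LipschitzOnWith L R (Metric.ball c (3 * r)))
    (hprox : ∀ y ∈ Metric.ball c (3 * r), ∀ h ζ,
      IsProxSubgrad univ (fun z => ⟪h, R z⟫) y ζ → ‖ζ‖ ≤ H * ‖h‖) :
    LipschitzOnWith H R (Metric.ball c r) := by
  refine LipschitzOnWith.of_dist_le_mul fun a ha b hb => ?_
  rcases eq_or_ne (R a) (R b) with heq | hne
  · rw [heq, dist_self]
    positivity
  set h := R a - R b
  have hscalar : |⟪h, R a⟫ - ⟪h, R b⟫| ≤ H * ‖h‖ * dist a b :=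
    (lipschitzOnWith_of_isProxSubgrad_norm_le (H := H * ‖h‖₊)
      ((innerSL ℝ h).lipschitz.comp_lipschitzOnWith hR) fun y hy => hprox y hy h).dist_le_mul
      a ha b hb
  rw [← inner_sub_right, real_inner_self_eq_norm_sq, abs_of_nonneg (by positivity)] at hscalar
  rw [dist_eq_norm]
  exact le_of_mul_le_mul_left (by linarith) (norm_sub_pos_iff.2 hne)

theorem ball_subset_and_lipschitzOnWith_of_isProxSubgrad_inner_norm_le [CompleteSpace E]
    {F : Type*} [NormedAddCommGroup F] [InnerProductSpace ℝ F] {R : E → F} {H L : ℝ≥0}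
    (hD : IsClosed D) (hc : c ∈ D) (hR : LipschitzOnWith L R D)
    (hprox : ∀ y ∈ D ∩ Metric.ball c (6 * r), ∀ h ζ,
      IsProxSubgrad D (fun z => ⟪h, R z⟫) y ζ → ‖ζ‖ ≤ H * ‖h‖) :
    Metric.ball c (3 * r) ⊆ D ∧ LipschitzOnWith H R (Metric.ball c r) := by
  have hball : Metric.ball c (3 * r) ⊆ D := by
    refine ball_subset_of_forall_isProxSubgrad_eq_zero hD hc fun y hy ζ hζ => ?_
    rw [show 2 * (3 * r) = 6 * r by ring] at hy
    simpa using hprox y hy 0 ζ (by simpa using hζ)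
  refine ⟨hball, lipschitzOnWith_of_isProxSubgrad_inner_norm_le (hR.mono hball)
    fun y hy h ζ hζ => hprox y ⟨hball hy, ?_⟩ h ζ (hζ.of_mem_nhdsWithin univ_mem)⟩
  rw [Metric.mem_ball] at hy ⊢
  linarith [dist_nonneg (x := y) (y := c)]

end ProximalSubgradient

section MintyCoordinates

variable {E : Type*} [NormedAddCommGroup E] [InnerProductSpace ℝ E]

/-- The Minty coordinate `x + λ v` of a pair `(x, v)`, which parametrizes the graph of a monotone
operator by the domain of its resolvent. -/
noncomputable def mintyPlus (lam : ℝ) : E × E →L[ℝ] E :=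
  .fst ℝ E E + lam • .snd ℝ E E

/-- The Minty coordinate `x - λ v` of a pair `(x, v)`; as a function of `mintyPlus` it is the
reflected resolvent (Cayley transform) of an operator. -/
noncomputable def mintyMinus (lam : ℝ) : E × E →L[ℝ] E :=
  .fst ℝ E E - lam • .snd ℝ E E

variable {lam : ℝ}

theorem mintyPlus_apply (lam : ℝ) (p : E × E) : mintyPlus lam p = p.1 + lam • p.2 := rfl

theorem mintyMinus_apply (lam : ℝ) (p : E × E) : mintyMinus lam p = p.1 - lam • p.2 := rfl

theorem norm_mintyMinus_sq (lam : ℝ) (p : E × E) :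
    ‖mintyMinus lam p‖ ^ 2 = ‖mintyPlus lam p‖ ^ 2 - 4 * lam * ⟪p.2, p.1⟫ := by
  rw [mintyMinus_apply, mintyPlus_apply, norm_sub_sq_real, norm_add_sq_real,
    real_inner_smul_right, real_inner_comm]
  ring

theorem norm_mintyMinus_le_iff (hlam : 0 < lam) {p : E × E} :
    ‖mintyMinus lam p‖ ≤ ‖mintyPlus lam p‖ ↔ 0 ≤ ⟪p.2, p.1⟫ := by
  rw [← sq_le_sq₀ (norm_nonneg _) (norm_nonneg _), norm_mintyMinus_sq, sub_le_self_iff,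
    mul_nonneg_iff_of_pos_left (by positivity)]

theorem mintyPlus_add_mintyMinus (lam : ℝ) (p : E × E) :
    mintyPlus lam p + mintyMinus lam p = (2 : ℝ) • p.1 := by
  rw [mintyPlus_apply, mintyMinus_apply]
  module

theorem mintyPlus_sub_mintyMinus (lam : ℝ) (p : E × E) :
    mintyPlus lam p - mintyMinus lam p = (2 * lam) • p.2 := by
  rw [mintyPlus_apply, mintyMinus_apply]
  module

end MintyCoordinates

section MaximalMonotone

variable {E : Type*} [NormedAddCommGroup E] [InnerProductSpace ℝ E] {T G : E → Set E}

theorem maxMono_iff :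
    MaxMono T ↔ Mono T ∧ ∀ q, (∀ p ∈ gph T, 0 ≤ ⟪p.2 - q.2, p.1 - q.1⟫) → q ∈ gph T := by
  refine and_congr_right fun hT => ⟨fun hmax q hq => ?_, fun hmem S hS hTS => ?_⟩
  · have hq' : ∀ p ∈ gph T, 0 ≤ ⟪q.2 - p.2, q.1 - p.1⟫ := fun p hp => by
      rw [← neg_sub p.2, ← neg_sub p.1, inner_neg_neg]
      exact hq p hp
    have hmono : Mono fun x => {v | (x, v) ∈ insert q (gph T)} := by
      change ∀ p ∈ insert q (gph T), ∀ p' ∈ insert q (gph T), 0 ≤ ⟪p.2 - p'.2, p.1 - p'.1⟫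
      rintro _ (rfl | hp) _ (rfl | hp')
      · simp
      · exact hq' _ hp'
      · exact hq _ hp
      · exact hT _ hp _ hp'
    rw [← hmax _ hmono (subset_insert q _)]
    exact mem_insert q _
  · exact Subset.antisymm (fun q hq => hmem q fun p hp => hS p (hTS hp) q hq) hTS

theorem exists_maxMono_gph_superset {A : Set (E × E)}
    (hA : ∀ p ∈ A, ∀ q ∈ A, 0 ≤ ⟪p.2 - q.2, p.1 - q.1⟫) :
    ∃ G : E → Set E, MaxMono G ∧ A ⊆ gph G := by
  obtain ⟨M, hAM, hM⟩ := zorn_subset_nonempty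
    {B : Set (E × E) | ∀ p ∈ B, ∀ q ∈ B, 0 ≤ ⟪p.2 - q.2, p.1 - q.1⟫}
    (fun c hc hchain _ => by
      refine ⟨⋃₀ c, ?_, fun s => subset_sUnion_of_mem⟩
      rintro p ⟨s, hs, hps⟩ q ⟨t, ht, hqt⟩
      rcases hchain.total hs ht with hst | hts
      · exact hc ht p (hst hps) q hqt
      · exact hc hs p hps q (hts hqt)) A hA
  exact ⟨fun x => {v | (x, v) ∈ M}, ⟨hM.prop, fun S hS hMS => (hM.eq_of_subset hS hMS).symm⟩, hAM⟩

theorem MaxMono.translate (hT : MaxMono T) (y : E) : MaxMono fun x => {v | v + y ∈ T x} := by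
  rw [maxMono_iff] at hT ⊢
  refine ⟨fun p hp q hq => ?_, fun q hq => hT.2 (q.1, q.2 + y) fun p hp => ?_⟩
  · simpa only [add_sub_add_right_eq_sub] using hT.1 (p.1, p.2 + y) hp (q.1, q.2 + y) hq
  · have hpq := hq (p.1, p.2 - y) (by simpa [gph] using hp)
    rwa [sub_sub, add_comm y] at hpq

end MaximalMonotone

section Minty

variable {E : Type*} [NormedAddCommGroup E]

/-- The epigraph of `(x, u) ↦ ‖x‖² + ‖u‖² + 2 F(x, u)`, where `F` is the Fitzpatrick function
`F(x, u) = sup {⟪x, b⟫ + ⟪u, a⟫ - ⟪a, b⟫ | (a, b) ∈ gph T}` of `T`, with squares completed. -/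
def fitzpatrickEpigraph (T : E → Set E) : Set ((E × E) × ℝ) :=
  {q | ∀ p ∈ gph T, ‖q.1.1 + p.2‖ ^ 2 + ‖q.1.2 + p.1‖ ^ 2 ≤ q.2 + ‖p.1 + p.2‖ ^ 2}

theorem isClosed_fitzpatrickEpigraph (T : E → Set E) : IsClosed (fitzpatrickEpigraph T) := by
  simp only [fitzpatrickEpigraph, ofPred_forall]
  exact isClosed_biInter fun p _ => isClosed_le (by fun_prop) (by fun_prop)

variable [InnerProductSpace ℝ E] {T : E → Set E} {q q' : (E × E) × ℝ} {s δ : ℝ}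

theorem norm_cross_add_sq (m p : E × E) :
    ‖m.1 + p.2‖ ^ 2 + ‖m.2 + p.1‖ ^ 2 =
      ‖m.1 + m.2‖ ^ 2 + ‖p.1 + p.2‖ ^ 2 - 2 * ⟪p.2 - m.2, p.1 - m.1⟫ := by
  simp only [norm_add_sq_real, inner_sub_left, inner_sub_right, real_inner_comm]
  ring

theorem norm_convexCombo_sq (s : ℝ) (u u' : E) :
    ‖(1 - s) • u + s • u'‖ ^ 2 =
      (1 - s) * ‖u‖ ^ 2 + s * ‖u'‖ ^ 2 - s * (1 - s) * ‖u - u'‖ ^ 2 := by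
  simp only [norm_add_sq_real, norm_sub_sq_real, norm_smul, mul_pow, Real.norm_eq_abs, sq_abs,
    real_inner_smul_left, real_inner_smul_right]
  ring

theorem convexCombo_mem_fitzpatrickEpigraph (hq : q ∈ fitzpatrickEpigraph T)
    (hq' : q' ∈ fitzpatrickEpigraph T) (hs₀ : 0 ≤ s) (hs₁ : s ≤ 1) :
    ((1 - s) • q.1 + s • q'.1, (1 - s) * q.2 + s * q'.2 -
      s * (1 - s) * (‖q.1.1 - q'.1.1‖ ^ 2 + ‖q.1.2 - q'.1.2‖ ^ 2)) ∈ fitzpatrickEpigraph T := by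
  intro p hp
  have hcombo : ∀ u u' w : E,
      (1 - s) • u + s • u' + w = (1 - s) • (u + w) + s • (u' + w) := fun u u' w => by module
  simp only [Prod.fst_add, Prod.snd_add, Prod.smul_fst, Prod.smul_snd, hcombo,
    norm_convexCombo_sq, add_sub_add_right_eq_sub]
  linear_combination (1 - s) * hq p hp + s * hq' p hp

theorem Mono.mem_fitzpatrickEpigraph (hT : Mono T) {p : E × E} (hp : p ∈ gph T) :
    (p, ‖p.1 + p.2‖ ^ 2) ∈ fitzpatrickEpigraph T := fun p' hp' => by
  linarith [norm_cross_add_sq p p', hT p' hp' p hp]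

theorem MaxMono.norm_add_sq_le_of_mem_fitzpatrickEpigraph (hT : MaxMono T)
    (hq : q ∈ fitzpatrickEpigraph T) : ‖q.1.1 + q.1.2‖ ^ 2 ≤ q.2 := by
  by_contra! hlt
  have hmem : q.1 ∈ gph T := (maxMono_iff.1 hT).2 q.1 fun p hp => by
    linarith [norm_cross_add_sq q.1 p, hq p hp]
  have hle := hq q.1 hmem
  rw [add_comm q.1.2] at hle
  linarith

theorem norm_sub_sq_le_of_mem_approxArgmin_fitzpatrickEpigraph
    (hq : q ∈ approxArgmin (fitzpatrickEpigraph T) Prod.snd δ)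
    (hq' : q' ∈ approxArgmin (fitzpatrickEpigraph T) Prod.snd δ) :
    ‖q.1.1 - q'.1.1‖ ^ 2 + ‖q.1.2 - q'.1.2‖ ^ 2 ≤ 4 * δ := by
  have hmid := convexCombo_mem_fitzpatrickEpigraph hq.1 hq'.1 (s := 1 / 2) (by norm_num)
    (by norm_num)
  linarith [hq.2 _ hmid, hq'.2 _ hmid]

theorem approxArgmin_fitzpatrickEpigraph_subset_closedBall {ε : ℝ} (hε : 0 < ε)
    (hδ : 4 * δ ≤ ε ^ 2) (hδε : δ ≤ ε) (hq : q ∈ approxArgmin (fitzpatrickEpigraph T) Prod.snd δ) :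
    approxArgmin (fitzpatrickEpigraph T) Prod.snd δ ⊆ Metric.closedBall q ε := fun q' hq' => by
  have hnorm := norm_sub_sq_le_of_mem_approxArgmin_fitzpatrickEpigraph hq' hq
  simp only [mem_closedBall_iff_norm, Prod.norm_def, Prod.fst_sub, Prod.snd_sub, sup_le_iff,
    Real.norm_eq_abs, abs_le]
  refine ⟨⟨abs_le_of_sq_le_sq' ?_ hε.le |>.2, abs_le_of_sq_le_sq' ?_ hε.le |>.2⟩, ?_, ?_⟩
  · linarith [sq_nonneg ‖q'.1.2 - q.1.2‖]
  · linarith [sq_nonneg ‖q'.1.1 - q.1.1‖]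
  · linarith [hq.2 q' hq'.1]
  · linarith [hq'.2 q hq.1]

theorem add_norm_sub_sq_le_of_isMinOn_fitzpatrickEpigraph (hq : q ∈ fitzpatrickEpigraph T)
    (hmin : IsMinOn Prod.snd (fitzpatrickEpigraph T) q) (hq' : q' ∈ fitzpatrickEpigraph T) :
    q.2 + (‖q.1.1 - q'.1.1‖ ^ 2 + ‖q.1.2 - q'.1.2‖ ^ 2) ≤ q'.2 := by
  set d := ‖q.1.1 - q'.1.1‖ ^ 2 + ‖q.1.2 - q'.1.2‖ ^ 2
  have hstep : ∀ s ∈ Ioo (0 : ℝ) 1, q.2 + (1 - s) * d ≤ q'.2 := fun s hs => by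
    have hle : q.2 ≤ (1 - s) * q.2 + s * q'.2 - s * (1 - s) * d :=
      isMinOn_iff.1 hmin _ (convexCombo_mem_fitzpatrickEpigraph hq hq' hs.1.le hs.2.le)
    exact le_of_mul_le_mul_left (by linarith) hs.1
  have hlim : Tendsto (fun s : ℝ => q.2 + (1 - s) * d) (𝓝[>] 0) (𝓝 (q.2 + (1 - 0) * d)) :=
    Continuous.tendsto' (by fun_prop) _ _ rfl |>.mono_left nhdsWithin_le_nhds
  have hle := le_of_tendsto hlim (mem_of_superset (Ioo_mem_nhdsGT one_pos) hstep)
  rwa [sub_zero, one_mul] at hle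

theorem MaxMono.nonempty_gph (hT : MaxMono T) : (gph T).Nonempty := by
  by_contra hempty
  rw [not_nonempty_iff_eq_empty] at hempty
  have hzero := (maxMono_iff.1 hT).2 0 fun p hp => by simp [hempty] at hp
  simp [hempty] at hzero

theorem MaxMono.exists_isMinOn_fitzpatrickEpigraph [CompleteSpace E] (hT : MaxMono T) :
    ∃ q ∈ fitzpatrickEpigraph T, IsMinOn Prod.snd (fitzpatrickEpigraph T) q := by
  obtain ⟨p, hp⟩ := hT.nonempty_gph
  have hne : (fitzpatrickEpigraph T).Nonempty := ⟨_, hT.1.mem_fitzpatrickEpigraph hp⟩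
  have hbdd : BddBelow (Prod.snd '' fitzpatrickEpigraph T) := ⟨0, forall_mem_image.2 fun q hq =>
    (sq_nonneg _).trans (hT.norm_add_sq_le_of_mem_fitzpatrickEpigraph hq)⟩
  refine exists_isMinOn_of_approxArgmin_subset_closedBall (isClosed_fitzpatrickEpigraph T) hne
    continuousOn_snd.lowerSemicontinuousOn hbdd fun ε hε => ?_
  have hδ : 0 < min (ε ^ 2 / 4) ε := by positivity
  obtain ⟨q, hq⟩ := approxArgmin_nonempty hne hbdd hδ
  refine ⟨_, hδ, q, approxArgmin_fitzpatrickEpigraph_subset_closedBall hε ?_ (min_le_right _ _) hq⟩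
  linarith [min_le_left (ε ^ 2 / 4) ε]

theorem MaxMono.exists_mem_gph_add_eq_zero [CompleteSpace E] (hT : MaxMono T) :
    ∃ p ∈ gph T, p.1 + p.2 = 0 := by
  obtain ⟨⟨⟨x, v⟩, c⟩, hq, hmin⟩ := hT.exists_isMinOn_fitzpatrickEpigraph
  have hc : ‖x + v‖ ^ 2 ≤ c := hT.norm_add_sq_le_of_mem_fitzpatrickEpigraph hq
  have hbound : ∀ p ∈ gph T, ‖x + v‖ ^ 2 + (‖x - p.1‖ ^ 2 + ‖v - p.2‖ ^ 2) ≤ ‖p.1 + p.2‖ ^ 2 :=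
    fun p hp => (add_le_add_left hc _).trans
      (add_norm_sub_sq_le_of_isMinOn_fitzpatrickEpigraph hq hmin (hT.1.mem_fitzpatrickEpigraph hp))
  have hmem : (-v, -x) ∈ gph T := (maxMono_iff.1 hT).2 _ fun p hp => by
    have hexpand : ⟪p.2 - -x, p.1 - -v⟫ = ‖x + v‖ ^ 2 + (‖p.1 + p.2‖ ^ 2 -
        (‖x + v‖ ^ 2 + (‖x - p.1‖ ^ 2 + ‖v - p.2‖ ^ 2))) / 2 := by
      simp only [sub_neg_eq_add, inner_add_left, inner_add_right, norm_add_sq_real,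
        norm_sub_sq_real, real_inner_comm]
      ring
    rw [hexpand]
    linarith [hbound p hp, sq_nonneg ‖x + v‖]
  refine ⟨_, hmem, ?_⟩
  have hsq := hbound _ hmem
  simp only [sub_neg_eq_add, ← neg_add, norm_neg, add_comm v x] at hsq ⊢
  rw [neg_eq_zero, ← norm_eq_zero, ← sq_eq_zero_iff]
  linarith [sq_nonneg ‖x + v‖]

theorem MaxMono.exists_mem_gph_add_eq [CompleteSpace E] (hT : MaxMono T) (y : E) :
    ∃ p ∈ gph T, p.1 + p.2 = y := by
  obtain ⟨p, hp, hzero⟩ := (hT.translate y).exists_mem_gph_add_eq_zero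
  exact ⟨(p.1, p.2 + y), hp, by rw [← add_assoc, hzero, zero_add]⟩

end Minty

section Coderivative

variable {E : Type*} [NormedAddCommGroup E] [InnerProductSpace ℝ E] {T G : E → Set E}
  {p : E × E} {x v w z : E}

theorem coderiv_congr_of_inter_eq {N : Set (E × E)} (hN : N ∈ 𝓝 (x, v))
    (heq : gph G ∩ N = gph T ∩ N) : coderiv G x v w = coderiv T x v w := by
  have hnhds : 𝓝[gph G] (x, v) = 𝓝[gph T] (x, v) := by
    rw [← nhdsWithin_inter_of_mem' (mem_nhdsWithin_of_mem_nhds hN), heq,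
      nhdsWithin_inter_of_mem' (mem_nhdsWithin_of_mem_nhds hN)]
  simp only [coderiv, rnc, hnhds]

theorem MaxMono.exists_mem_gph_sub_add_sub_eq [CompleteSpace E] (hG : MaxMono G)
    (hp : p ∈ gph G) (d : E) :
    ∃ u ∈ gph G, (u.1 - p.1) + (u.2 - p.2) = d ∧ ‖(u.1 - p.1) - (u.2 - p.2)‖ ≤ ‖d‖ := by
  obtain ⟨u, hu, hsum⟩ := hG.exists_mem_gph_add_eq (p.1 + p.2 + d)
  have hd : (u.1 - p.1) + (u.2 - p.2) = d := by
    rw [sub_add_sub_comm, hsum, add_sub_cancel_left]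
  refine ⟨u, hu, hd, ?_⟩
  have hle := (norm_mintyMinus_le_iff one_pos (p := u - p)).2 (hG.1 u hu p hp)
  rwa [mintyMinus_apply, mintyPlus_apply, one_smul, Prod.fst_sub, Prod.snd_sub, hd] at hle

theorem norm_le_norm_add_of_norm_sub_le_norm_add {α γ : E} (h : ‖α - γ‖ ≤ ‖α + γ‖) :
    ‖α‖ ≤ ‖α + γ‖ ∧ ‖γ‖ ≤ ‖α + γ‖ := by
  have hsq := pow_le_pow_left₀ (norm_nonneg _) h 2
  have hpar := parallelogram_law_with_norm ℝ α γ
  constructor <;> refine abs_le_of_sq_le_sq' ?_ (norm_nonneg _) |>.2 <;>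
    nlinarith [sq_nonneg ‖α‖, sq_nonneg ‖γ‖]

theorem inner_nonneg_of_norm_sub_le_norm_add (h : ‖z - w‖ ≤ ‖z + w‖) : 0 ≤ ⟪z, w⟫ := by
  have hsq := pow_le_pow_left₀ (norm_nonneg _) h 2
  rw [norm_sub_sq_real, norm_add_sq_real] at hsq
  linarith

theorem norm_sub_le_norm_add_add_of_inner_le {α γ : E} {t ε : ℝ} (ht : 0 < t) (hε : 0 ≤ ε)
    (hsum : α + γ = t • (z - w)) (hdiff : ‖α - γ‖ ≤ ‖α + γ‖)
    (hle : ⟪z, α⟫ + ⟪-w, γ⟫ ≤ ε * (‖α‖ + ‖γ‖)) : ‖z - w‖ ≤ ‖z + w‖ + 4 * ε := by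
  rcases (norm_nonneg (z - w)).eq_or_lt with hzero | hpos
  · rw [← hzero]
    positivity
  obtain ⟨hα, hγ⟩ := norm_le_norm_add_of_norm_sub_le_norm_add hdiff
  rw [hsum, norm_smul, Real.norm_of_nonneg ht.le] at hα hγ hdiff
  have hupper : ε * (‖α‖ + ‖γ‖) ≤ ε * (2 * (t * ‖z - w‖)) := by
    gcongr
    linarith
  have hlower : -(‖z + w‖ * (t * ‖z - w‖)) ≤ ⟪z + w, α - γ⟫ := by
    refine (neg_le_neg ?_).trans (neg_le_of_abs_le (abs_real_inner_le_norm _ _))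
    gcongr
  have hidentity : 2 * (⟪z, α⟫ + ⟪-w, γ⟫) = ⟪z + w, α - γ⟫ + ⟪z - w, α + γ⟫ := by
    simp only [inner_add_left, inner_sub_left, inner_add_right, inner_sub_right, inner_neg_left]
    ring
  rw [hsum, real_inner_smul_right, real_inner_self_eq_norm_sq] at hidentity
  exact le_of_mul_le_mul_left (by linarith) (mul_pos ht hpos)

theorem MaxMono.inner_nonneg_of_mem_coderiv [CompleteSpace E] (hG : MaxMono G)
    (hp : p ∈ gph G) (hz : z ∈ coderiv G p.1 p.2 w) : 0 ≤ ⟪z, w⟫ := by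
  refine inner_nonneg_of_norm_sub_le_norm_add (le_of_forall_pos_le_add fun ε hε => ?_)
  obtain ⟨r, hr, hnormal⟩ := Metric.mem_nhdsWithin_iff.1 (hz (ε / 4) (by positivity))
  set t : ℝ := r / (‖z - w‖ + 1)
  have ht : 0 < t := by positivity
  obtain ⟨u, hu, hsum, hdiff⟩ := hG.exists_mem_gph_sub_add_sub_eq hp (t • (z - w))
  rw [← hsum] at hdiff
  have htr : ‖t • (z - w)‖ < r := by
    rw [norm_smul, Real.norm_of_nonneg ht.le, div_mul_eq_mul_div, div_lt_iff₀ (by positivity)]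
    gcongr
    exact lt_add_one _
  have hub : u ∈ Metric.ball p r := by
    obtain ⟨hfst, hsnd⟩ := norm_le_norm_add_of_norm_sub_le_norm_add hdiff
    rw [hsum] at hfst hsnd
    exact mem_ball_iff_norm.2 (max_lt (hfst.trans_lt htr) (hsnd.trans_lt htr))
  have hle := norm_sub_le_norm_add_add_of_inner_le ht (by positivity) hsum hdiff
    (hnormal ⟨hub, hu⟩)
  linarith

theorem Mono.hypoOn (hG : Mono G) {W : Set (E × E)} (hTG : gph T ∩ W ⊆ gph G) {r : ℝ}
    (hr : 0 ≤ r) : HypoOn r T W := fun p hp q hq =>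
  (neg_nonpos.2 (by positivity)).trans (hG p (hTG hp) q (hTG hq))

end Coderivative

section ReflectedResolvent

open scoped NNReal

variable {E : Type*} [NormedAddCommGroup E] [InnerProductSpace ℝ E] {T G : E → Set E}
  {K W : Set (E × E)} {p : E × E} {x v h ζ : E} {lam r ρ : ℝ} {L : ℝ≥0}

/-- The reflected resolvent `x + λ v ↦ x - λ v`, `(x, v) ∈ K`, of the operator with graph `K`.
It is meaningful on `mintyPlus lam '' K` when `mintyPlus lam` is injective on `K`; elsewhere its
value is arbitrary. -/
noncomputable def reflectedResolvent (lam : ℝ) (K : Set (E × E)) (y : E) : E :=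
  mintyMinus lam (Function.invFunOn (mintyPlus lam) K y)

theorem reflectedResolvent_mintyPlus (hinj : InjOn (mintyPlus lam) K) (hp : p ∈ K) :
    reflectedResolvent lam K (mintyPlus lam p) = mintyMinus lam p := by
  rw [reflectedResolvent, hinj.leftInvOn_invFunOn hp]

theorem exists_lipschitzOnWith_reflectedResolvent
    (hanti : AntilipschitzWith L (K.domRestrict (mintyPlus lam))) :
    ∃ L', LipschitzOnWith L' (reflectedResolvent lam K) (mintyPlus lam '' K) := by
  have hinv : LipschitzOnWith L (Function.invFunOn (mintyPlus lam) K) (mintyPlus lam '' K) :=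
    lipschitzOnWith_iff_restrict.2 (hanti.to_rightInvOn'
      (fun _ hy => Function.invFunOn_mem hy) fun _ hy => Function.invFunOn_eq hy)
  exact ⟨_, (mintyMinus lam).lipschitz.comp_lipschitzOnWith hinv⟩

theorem isClosed_image_mintyPlus [CompleteSpace E] (hK : IsClosed K)
    (hanti : AntilipschitzWith L (K.domRestrict (mintyPlus lam))) :
    IsClosed (mintyPlus lam '' K) := by
  have : CompleteSpace K := hK.completeSpace_coe
  have hcont : UniformContinuous (K.domRestrict (mintyPlus lam)) :=
    (mintyPlus (E := E) lam).uniformContinuous.comp uniformContinuous_subtype_val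
  simpa only [range_domRestrict] using hanti.isClosed_range hcont

theorem HypoOn.mul_norm_fst_sub_le (hT : HypoOn r T W) (hlam : 0 ≤ lam) {q : E × E}
    (hp : p ∈ gph T ∩ W) (hq : q ∈ gph T ∩ W) :
    (1 - lam * r) * ‖p.1 - q.1‖ ≤ ‖mintyPlus lam (p - q)‖ := by
  rcases (norm_nonneg (p.1 - q.1)).eq_or_lt with hzero | hpos
  · rw [← hzero, mul_zero]
    exact norm_nonneg _
  have hinner : ⟪mintyPlus lam (p - q), p.1 - q.1⟫ =
      ‖p.1 - q.1‖ ^ 2 + lam * ⟪p.2 - q.2, p.1 - q.1⟫ := by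
    rw [mintyPlus_apply, Prod.fst_sub, Prod.snd_sub, inner_add_left, real_inner_self_eq_norm_sq,
      real_inner_smul_left]
  have hhypo := mul_le_mul_of_nonneg_left (hT p hp q hq) hlam
  have hcauchy := real_inner_le_norm (mintyPlus lam (p - q)) (p.1 - q.1)
  exact le_of_mul_le_mul_right (by linarith) hpos

theorem HypoOn.exists_antilipschitzWith_mintyPlus (hT : HypoOn r T W) (hlam : 0 < lam)
    (hr : lam * r < 1) :
    ∃ L, AntilipschitzWith L ((gph T ∩ W).domRestrict (mintyPlus lam)) := by
  set μ := 1 - lam * r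
  have hμ : 0 < μ := sub_pos.2 hr
  refine ⟨Real.toNNReal (max μ⁻¹ ((1 + μ⁻¹) / lam)), AntilipschitzWith.of_le_mul_dist ?_⟩
  rintro ⟨p, hp⟩ ⟨q, hq⟩
  rw [Real.coe_toNNReal _ (by positivity), domRestrict_apply, domRestrict_apply,
    Subtype.dist_eq, dist_eq_norm, dist_eq_norm, ← map_sub]
  set u := p - q
  have hfst : ‖u.1‖ ≤ μ⁻¹ * ‖mintyPlus lam u‖ := by
    rw [← div_eq_inv_mul, le_div_iff₀' hμ]
    exact hT.mul_norm_fst_sub_le hlam.le hp hq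
  have hsnd : ‖u.2‖ ≤ (1 + μ⁻¹) / lam * ‖mintyPlus lam u‖ := by
    have htri : ‖lam • u.2‖ ≤ ‖mintyPlus lam u‖ + ‖u.1‖ := by
      rw [← add_sub_cancel_left u.1 (lam • u.2)]
      exact norm_sub_le _ _
    rw [norm_smul, Real.norm_of_nonneg hlam.le] at htri
    rw [div_mul_eq_mul_div, le_div_iff₀' hlam]
    linarith
  refine max_le (hfst.trans ?_) (hsnd.trans ?_) <;> gcongr
  exacts [le_max_left _ _, le_max_right _ _]

theorem sub_mem_coderiv_of_isProxSubgrad (hK : K ∈ 𝓝[gph T] p) (hp : p ∈ K)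
    (hinj : InjOn (mintyPlus lam) K)
    (hζ : IsProxSubgrad (mintyPlus lam '' K) (fun y => ⟪h, reflectedResolvent lam K y⟫)
      (mintyPlus lam p) ζ) :
    ζ - h ∈ coderiv T p.1 p.2 (-(lam • (ζ + h))) := by
  obtain ⟨C, hC⟩ := hζ
  intro ε hε
  have htendsto : Tendsto (mintyPlus lam) (𝓝[gph T] p)
      (𝓝[mintyPlus lam '' K] (mintyPlus lam p)) :=
    tendsto_nhdsWithin_iff.2 ⟨(mintyPlus lam).continuous.continuousAt.mono_left
      nhdsWithin_le_nhds, mem_of_superset hK fun q hq => mem_image_of_mem _ hq⟩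
  have hsmall : ∀ᶠ q in 𝓝[gph T] p, |C| * ‖mintyPlus lam (q - p)‖ * (1 + |lam|) < ε := by
    have hcont : Continuous fun q => |C| * ‖mintyPlus lam (q - p)‖ * (1 + |lam|) := by fun_prop
    refine (hcont.tendsto' p 0 (by simp)).mono_left nhdsWithin_le_nhds |>.eventually_lt_const hε
  filter_upwards [htendsto.eventually hC, hsmall, hK] with q hq hqε hqK
  rw [reflectedResolvent_mintyPlus hinj hp, reflectedResolvent_mintyPlus hinj hqK, ← map_sub] at hq
  have hexpand : ⟪ζ - h, q.1 - p.1⟫ + ⟪lam • (ζ + h), q.2 - p.2⟫ =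
      ⟪ζ, mintyPlus lam (q - p)⟫ - (⟪h, mintyMinus lam q⟫ - ⟪h, mintyMinus lam p⟫) := by
    rw [← inner_sub_right, ← map_sub, mintyPlus_apply, mintyMinus_apply, Prod.fst_sub,
      Prod.snd_sub]
    generalize q.1 - p.1 = α, q.2 - p.2 = γ
    simp only [inner_add_left, inner_sub_left, inner_add_right, inner_sub_right,
      real_inner_smul_left, real_inner_smul_right]
    ring
  have hnorm : ‖mintyPlus lam (q - p)‖ ≤ (1 + |lam|) * (‖q.1 - p.1‖ + ‖q.2 - p.2‖) := by
    have htri := norm_add_le (q - p).1 (lam • (q - p).2)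
    rw [norm_smul, Real.norm_eq_abs, ← mintyPlus_apply, Prod.fst_sub, Prod.snd_sub] at htri
    linarith [mul_nonneg (abs_nonneg lam) (norm_nonneg (q.1 - p.1)), norm_nonneg (q.2 - p.2)]
  rw [neg_neg, hexpand]
  calc ⟪ζ, mintyPlus lam (q - p)⟫ - (⟪h, mintyMinus lam q⟫ - ⟪h, mintyMinus lam p⟫)
      ≤ C * ‖mintyPlus lam (q - p)‖ ^ 2 := by linarith
    _ ≤ |C| * ‖mintyPlus lam (q - p)‖ * ‖mintyPlus lam (q - p)‖ := by
        rw [mul_assoc, ← sq]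
        gcongr
        exact le_abs_self C
    _ ≤ |C| * ‖mintyPlus lam (q - p)‖ * ((1 + |lam|) * (‖q.1 - p.1‖ + ‖q.2 - p.2‖)) := by gcongr
    _ ≤ ε * (‖q.1 - p.1‖ + ‖q.2 - p.2‖) := by
        rw [← mul_assoc]
        gcongr

theorem norm_le_of_isProxSubgrad_reflectedResolvent (hlam : 0 < lam) (hK : K ∈ 𝓝[gph T] p)
    (hp : p ∈ K) (hinj : InjOn (mintyPlus lam) K)
    (hcod : ∀ w z, z ∈ coderiv T p.1 p.2 w → 0 ≤ ⟪z, w⟫)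
    (hζ : IsProxSubgrad (mintyPlus lam '' K) (fun y => ⟪h, reflectedResolvent lam K y⟫)
      (mintyPlus lam p) ζ) :
    ‖ζ‖ ≤ ‖h‖ := by
  have hnonneg := hcod _ _ (sub_mem_coderiv_of_isProxSubgrad hK hp hinj hζ)
  have hexpand : ⟪ζ - h, -(lam • (ζ + h))⟫ = lam * (‖h‖ ^ 2 - ‖ζ‖ ^ 2) := by
    simp only [inner_neg_right, real_inner_smul_right, inner_sub_left, inner_add_right,
      real_inner_self_eq_norm_sq, real_inner_comm]
    ring
  rw [hexpand, mul_nonneg_iff_of_pos_left hlam, sub_nonneg] at hnonneg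
  exact abs_le_of_sq_le_sq' hnonneg (norm_nonneg h) |>.2

theorem Mono.injOn_mintyPlus (hG : Mono G) (hlam : 0 < lam) : InjOn (mintyPlus lam) (gph G) := by
  intro p hp q hq heq
  have hplus : mintyPlus lam (p - q) = 0 := by rw [map_sub, heq, sub_self]
  have hminus : mintyMinus lam (p - q) = 0 := by
    rw [← norm_le_zero_iff, ← norm_zero (E := E), ← hplus]
    exact (norm_mintyMinus_le_iff hlam).2 (hG p hp q hq)
  have hfst := mintyPlus_add_mintyMinus lam (p - q)
  have hsnd := mintyPlus_sub_mintyMinus lam (p - q)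
  rw [hplus, hminus, add_zero, eq_comm, smul_eq_zero_iff_right two_ne_zero] at hfst
  rw [hplus, hminus, sub_zero, eq_comm, smul_eq_zero_iff_right (by positivity)] at hsnd
  exact sub_eq_zero.1 (Prod.ext hfst hsnd)

theorem locMaxBAt_of_monoOn_of_image_mem_nhds (hlam : 0 < lam) (hW : W ∈ 𝓝 (x, v))
    (hmono : MonoOn' T W)
    (himage : mintyPlus lam '' (gph T ∩ W) ∈ 𝓝 (mintyPlus lam (x, v))) : LocMaxBAt T x v := by
  obtain ⟨G, hG, hTG⟩ := exists_maxMono_gph_superset hmono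
  obtain ⟨U, hU, V, hV, hUV⟩ := mem_nhds_prod_iff.1
    (inter_mem hW ((mintyPlus lam).continuous.continuousAt himage))
  refine ⟨U, hU, V, hV, G, hG, Subset.antisymm (fun q hq => ?_) fun q hq =>
    ⟨hTG ⟨hq.1, (hUV hq.2).1⟩, hq.2⟩⟩
  obtain ⟨q', hq', heq⟩ := (hUV hq.2).2
  obtain rfl : q' = q := hG.1.injOn_mintyPlus hlam (hTG hq') hq.1 heq
  exact ⟨hq'.1, hq.2⟩

theorem monoOn'_of_lipschitzOnWith_reflectedResolvent {B : Set E} (hlam : 0 < lam)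
    (hinj : InjOn (mintyPlus lam) (gph T ∩ W))
    (hlip : LipschitzOnWith 1 (reflectedResolvent lam (gph T ∩ W)) B) :
    MonoOn' T (W ∩ mintyPlus lam ⁻¹' B) := fun p ⟨hpT, hpW, hpB⟩ q ⟨hqT, hqW, hqB⟩ => by
  have hle := hlip.norm_sub_le hpB hqB
  rw [reflectedResolvent_mintyPlus hinj ⟨hpT, hpW⟩, reflectedResolvent_mintyPlus hinj ⟨hqT, hqW⟩,
    NNReal.coe_one, one_mul, ← map_sub, ← map_sub] at hle
  exact (norm_mintyMinus_le_iff hlam).1 hle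

theorem inter_closedBall_mem_nhdsWithin_of_antilipschitzWith {M N : Type*} [PseudoMetricSpace M]
    [PseudoMetricSpace N] {Ω : Set M} {f : M → N} {a b : M}
    (hanti : AntilipschitzWith L ((Ω ∩ Metric.closedBall a ρ).domRestrict f)) (ha : a ∈ Ω)
    (hb : b ∈ Ω ∩ Metric.closedBall a ρ) (hab : dist (f b) (f a) < ρ / (L + 1)) :
    Ω ∩ Metric.closedBall a ρ ∈ 𝓝[Ω] b := by
  have hρ : 0 < ρ := (div_pos_iff_of_pos_right (by positivity)).1 (dist_nonneg.trans_lt hab)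
  have hdist : dist b a < ρ := calc
    dist b a ≤ L * dist (f b) (f a) :=
      hanti.le_mul_dist ⟨b, hb⟩ ⟨a, ha, Metric.mem_closedBall_self hρ.le⟩
    _ ≤ L * (ρ / (L + 1)) := by gcongr
    _ < (L + 1) * (ρ / (L + 1)) := by
      gcongr
      exact lt_add_one _
    _ = ρ := mul_div_cancel₀ ρ (by positivity)
  exact inter_mem self_mem_nhdsWithin
    (mem_nhdsWithin_of_mem_nhds (Metric.closedBall_mem_nhds_of_mem hdist))

theorem locMaxBAt_of_inner_coderiv_nonneg [CompleteSpace E] (hlam : 0 < lam) (hρ : 0 < ρ)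
    (hx : (x, v) ∈ gph T) (hclosed : IsClosed (gph T ∩ Metric.closedBall (x, v) ρ))
    (hanti : AntilipschitzWith L
      ((gph T ∩ Metric.closedBall (x, v) ρ).domRestrict (mintyPlus lam)))
    (hcod : ∀ p ∈ gph T ∩ Metric.closedBall (x, v) ρ, ∀ w z,
      z ∈ coderiv T p.1 p.2 w → 0 ≤ ⟪z, w⟫) :
    LocMaxBAt T x v := by
  set K := gph T ∩ Metric.closedBall (x, v) ρ
  set c := mintyPlus lam (x, v)
  have hxK : (x, v) ∈ K := ⟨hx, Metric.mem_closedBall_self hρ.le⟩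
  have hinj : InjOn (mintyPlus lam) K := injOn_iff_injective.2 hanti.injective
  obtain ⟨L', hlip⟩ := exists_lipschitzOnWith_reflectedResolvent hanti
  set s : ℝ := ρ / (L + 1) / 6
  have hs : 0 < s := by positivity
  obtain ⟨hball, hnonexp⟩ := ball_subset_and_lipschitzOnWith_of_isProxSubgrad_inner_norm_le
    (H := 1) (r := s) (isClosed_image_mintyPlus hclosed hanti) (mem_image_of_mem _ hxK) hlip (by
      rintro _ ⟨⟨p, hp, rfl⟩, hpc⟩ h ζ hζ
      rw [Metric.mem_ball, mul_div_cancel₀ _ (by norm_num : (6 : ℝ) ≠ 0)] at hpc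
      rw [NNReal.coe_one, one_mul]
      exact norm_le_of_isProxSubgrad_reflectedResolvent hlam
        (inter_closedBall_mem_nhdsWithin_of_antilipschitzWith hanti hx hp hpc) hp hinj
        (hcod p hp) hζ)
  refine locMaxBAt_of_monoOn_of_image_mem_nhds hlam
    (inter_mem (Metric.closedBall_mem_nhds _ hρ)
      ((mintyPlus lam).continuous.continuousAt (Metric.ball_mem_nhds c hs)))
    (monoOn'_of_lipschitzOnWith_reflectedResolvent hlam hinj hnonexp) ?_
  rw [← inter_assoc, image_inter_preimage]
  refine inter_mem (mem_of_superset (Metric.ball_mem_nhds c (by positivity)) hball)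
    (Metric.ball_mem_nhds c hs)

end ReflectedResolvent

/-- Coderivative characterization of local maximal monotonicity in Hilbert spaces:
`T` is locally maximal monotone around `(x̄, v̄)` iff it is locally hypomonotone there
and its regular coderivative is positive-semidefinite near `(x̄, v̄)`. -/
theorem stmt_18 (T : X → Set X) (xbar vbar : X) (hx : vbar ∈ T xbar)
    (hcl : LocClosedAt (gph T) (xbar, vbar)) :
    LocMaxBAt T xbar vbar ↔
      ((∃ r > 0, LocHypoAt r T xbar vbar) ∧
        ∃ W ∈ 𝓝 ((xbar, vbar) : X × X), ∀ p ∈ gph T ∩ W, ∀ w z : X,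
          z ∈ coderiv T p.1 p.2 w → 0 ≤ ⟪z, w⟫) := by
  constructor
  · rintro ⟨U, hU, V, hV, G, hG, heq⟩
    have hUV : U ×ˢ V ∈ 𝓝 (xbar, vbar) := prod_mem_nhds hU hV
    have hTG : gph T ∩ U ×ˢ V ⊆ gph G := heq ▸ inter_subset_left
    refine ⟨⟨1, one_pos, _, hUV, hG.1.hypoOn hTG zero_le_one⟩, _, interior_mem_nhds.2 hUV, ?_⟩
    intro p hp w z hz
    rw [← coderiv_congr_of_inter_eq (mem_interior_iff_mem_nhds.1 hp.2) heq] at hz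
    exact hG.inner_nonneg_of_mem_coderiv (hTG ⟨hp.1, interior_subset hp.2⟩) hz
  · rintro ⟨⟨r, hr, W, hW, hhypo⟩, W', hW', hcod⟩
    obtain ⟨ε, hε, hclosed⟩ := hcl
    obtain ⟨ρ, hρ, hsub⟩ := Metric.nhds_basis_closedBall.mem_iff.1
      (inter_mem (Metric.closedBall_mem_nhds _ hε) (inter_mem hW hW'))
    have hlam : (2 * r)⁻¹ * r < 1 := by field_simp; norm_num
    have hhypoρ : HypoOn r T (Metric.closedBall (xbar, vbar) ρ) := fun p hp q hq =>
      hhypo p ⟨hp.1, (hsub hp.2).2.1⟩ q ⟨hq.1, (hsub hq.2).2.1⟩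
    have hclosedρ : IsClosed (gph T ∩ Metric.closedBall (xbar, vbar) ρ) := by
      rw [← inter_eq_right.2 (hsub.trans inter_subset_left), ← inter_assoc]
      exact hclosed.inter Metric.isClosed_closedBall
    obtain ⟨L, hanti⟩ := hhypoρ.exists_antilipschitzWith_mintyPlus (by positivity) hlam
    exact locMaxBAt_of_inner_coderiv_nonneg (by positivity) hρ hx hclosedρ hanti
      fun p hp => hcod p ⟨hp.1, (hsub hp.2).2.2⟩
end
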